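/- arXiv:math/0604467 — 2 statements merged into one kernel-verified Lean document; each statement's English description precedes it below -/
import Mathlib

section
/- For every n ≥ 1 there is a planar graph G_n with 3n vertices, 7n − 6 triangles, and no K₄ subgraph, such that every strong ω-decomposition of G_n with width 4 has order at least (7/6)|V(G_n)| − 3. -/
open SimpleGraph

universe u

/-- `H` is a minor of `G`: there are pairwise disjoint nonempty connected branch sets
in `G`, one for each vertex of `H`, with an edge of `G` between the branch sets of any
two adjacent vertices of `H`. -/
def IsMinor {α β : Type*} (H : SimpleGraph α) (G : SimpleGraph β) : Prop :=
  ∃ f : α → Set β,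
    (∀ a, (f a).Nonempty) ∧
    (∀ a, (G.induce (f a)).Connected) ∧
    (Pairwise fun a b => Disjoint (f a) (f b)) ∧
    ∀ a b, H.Adj a b → ∃ u ∈ f a, ∃ v ∈ f b, G.Adj u v

/-- A graph is planar iff it has no `K₅` minor and no `K₃,₃` minor (Wagner's theorem). -/
def Planar {β : Type*} (G : SimpleGraph β) : Prop :=
  ¬ IsMinor (⊤ : SimpleGraph (Fin 5)) G ∧
  ¬ IsMinor (completeBipartiteGraph (Fin 3) (Fin 3)) G

/-- `D` (a graph on index type `ι`, with bags `X i ⊆ V(G)`) is a decomposition of `G`: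
every vertex lies in some bag, the bags containing any fixed vertex induce a connected
subgraph of `D`, and for every edge `vw` of `G` the subgraphs `D(v)` and `D(w)` touch
(share a bag, or a bag containing `v` is adjacent in `D` to a bag containing `w`). -/
structure IsDecomposition {V ι : Type*} (G : SimpleGraph V) (D : SimpleGraph ι)
    (X : ι → Finset V) : Prop where
  nonempty : ∀ v : V, ∃ i, v ∈ X i
  connected : ∀ v : V, (D.induce {i : ι | v ∈ X i}).Connected
  touch : ∀ ⦃v w : V⦄, G.Adj v w →
    (∃ i, v ∈ X i ∧ w ∈ X i) ∨ (∃ i j, D.Adj i j ∧ v ∈ X i ∧ w ∈ X j)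

/-- A strong decomposition: additionally, for every edge `vw` of `G` some bag contains
both `v` and `w`. -/
structure IsStrongDecomposition {V ι : Type*} (G : SimpleGraph V) (D : SimpleGraph ι)
    (X : ι → Finset V) : Prop where
  nonempty : ∀ v : V, ∃ i, v ∈ X i
  connected : ∀ v : V, (D.induce {i : ι | v ∈ X i}).Connected
  intersect : ∀ ⦃v w : V⦄, G.Adj v w → ∃ i, v ∈ X i ∧ w ∈ X i

/-- A separated projection of a connected set to one side of a clique cut. -/
lemma proj_reach {V V1 : Type*} (G : SimpleGraph V) (G1 : SimpleGraph V1)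
    (A B : Set V) (hAB : ∀ x, x ∈ A ∨ x ∈ B)
    (hsep : ∀ x y, x ∉ A → y ∉ B → ¬ G.Adj x y)
    (hT : ∀ x y, x ∈ A → x ∈ B → y ∈ A → y ∈ B → x ≠ y → G.Adj x y)
    (φ : V → V1) (hφ : ∀ x y, x ∈ A → y ∈ A → G.Adj x y → G1.Adj (φ x) (φ y))
    (S : Set V) (hS : (G.induce S).Connected) (u w : V) (hu : u ∈ S) (huA : u ∈ A) (hw : w ∈ S) :
    ∃ t, ∃ ht : t ∈ S ∩ A, (w ∈ A ∧ t = w ∨ w ∉ A ∧ t ∈ B) ∧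
      (G1.induce (φ '' (S ∩ A))).Reachable ⟨φ u, Set.mem_image_of_mem φ ⟨hu, huA⟩⟩
        ⟨φ t, Set.mem_image_of_mem φ ht⟩ := by
  have key : ∀ x y : V, ∀ hx : x ∈ S ∩ A, ∀ hy : y ∈ S ∩ A, G.Adj x y →
      (G1.induce (φ '' (S ∩ A))).Reachable ⟨φ x, Set.mem_image_of_mem φ hx⟩
        ⟨φ y, Set.mem_image_of_mem φ hy⟩ := by
    intro x y hx hy hxy
    apply SimpleGraph.Adj.reachable
    exact hφ x y hx.2 hy.2 hxy
  have hr := hS.preconnected ⟨u, hu⟩ ⟨w, hw⟩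
  rw [SimpleGraph.reachable_iff_reflTransGen] at hr
  suffices h : ∀ z : S, Relation.ReflTransGen (G.induce S).Adj ⟨u, hu⟩ z →
    ∃ t, ∃ ht : t ∈ S ∩ A, (z.1 ∈ A ∧ t = z.1 ∨ z.1 ∉ A ∧ t ∈ B) ∧
      (G1.induce (φ '' (S ∩ A))).Reachable ⟨φ u, Set.mem_image_of_mem φ ⟨hu, huA⟩⟩
        ⟨φ t, Set.mem_image_of_mem φ ht⟩ from h _ hr
  intro z hz
  induction hz with
  | refl => exact ⟨u, ⟨hu, huA⟩, Or.inl ⟨huA, rfl⟩, SimpleGraph.Reachable.refl _⟩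
  | @tail b c _ hbc ih =>
    obtain ⟨t, ht, hcase, hreach⟩ := ih
    have hbc' : G.Adj b.1 c.1 := hbc
    rcases hcase with ⟨hb, rfl⟩ | ⟨hb, htB⟩
    · by_cases hc : c.1 ∈ A
      · exact ⟨c.1, ⟨c.2, hc⟩, Or.inl ⟨hc, rfl⟩, hreach.trans (key _ _ ht ⟨c.2, hc⟩ hbc')⟩
      · refine ⟨b.1, ht, Or.inr ⟨hc, ?_⟩, hreach⟩
        by_contra hbB
        exact hsep _ _ hc hbB hbc'.symm
    · by_cases hc : c.1 ∈ A
      · have hcB : c.1 ∈ B := by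
          by_contra hcB
          exact hsep _ _ hb hcB hbc'
        refine ⟨c.1, ⟨c.2, hc⟩, Or.inl ⟨hc, rfl⟩, ?_⟩
        by_cases htc : t = c.1
        · subst htc; exact hreach
        · exact hreach.trans (key _ _ ht ⟨c.2, hc⟩ (hT _ _ ht.2 htB hc hcB htc))
      · exact ⟨t, ht, Or.inr ⟨hc, htB⟩, hreach⟩

lemma one_side {α V V1 : Type*} (H : SimpleGraph α) (G : SimpleGraph V) (G1 : SimpleGraph V1)
    (A B : Set V) (hAB : ∀ x, x ∈ A ∨ x ∈ B)
    (hsep : ∀ x y, x ∉ A → y ∉ B → ¬ G.Adj x y)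
    (hT : ∀ x y, x ∈ A → x ∈ B → y ∈ A → y ∈ B → x ≠ y → G.Adj x y)
    (φ : V → V1) (v1 : V1) (hinj : Set.InjOn φ A)
    (hv1 : ∀ x ∈ A, φ x ≠ v1)
    (hφ : ∀ x y, x ∈ A → y ∈ A → G.Adj x y → G1.Adj (φ x) (φ y))
    (hv1T : ∀ x, x ∈ A → x ∈ B → G1.Adj v1 (φ x))
    (f : α → Set V)
    (hconn : ∀ a, (G.induce (f a)).Connected)
    (hdisj : Pairwise fun a b => Disjoint (f a) (f b))
    (hadj : ∀ a b, H.Adj a b → ∃ u ∈ f a, ∃ v ∈ f b, G.Adj u v)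
    (hsub : ∀ a b, f a ∩ A = ∅ → f b ∩ A = ∅ → a = b) :
    IsMinor H G1 := by
  classical
  set g : α → Set V1 := fun a => if f a ∩ A = ∅ then {v1} else φ '' (f a ∩ A) with hg
  have gpos : ∀ a, f a ∩ A = ∅ → g a = {v1} := fun a h => by simp [hg, h]
  have gneg : ∀ a, f a ∩ A ≠ ∅ → g a = φ '' (f a ∩ A) := fun a h => by simp [hg, h]
  have rep : ∀ a, f a ∩ A ≠ ∅ → ∀ w ∈ f a, ∃ t ∈ f a ∩ A, (w ∈ A ∧ t = w ∨ w ∉ A ∧ t ∈ B) := by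
    intro a ha w hw
    obtain ⟨u, hu, huA⟩ := Set.nonempty_iff_ne_empty.mpr ha
    obtain ⟨t, ht, h, _⟩ := proj_reach G G1 A B hAB hsep hT φ hφ (f a) (hconn a) u w hu huA hw
    exact ⟨t, ht, h⟩
  have edge1 : ∀ a b u v, f a ∩ A = ∅ → f b ∩ A ≠ ∅ → u ∈ f a → v ∈ f b → G.Adj u v →
      ∃ x ∈ g b, G1.Adj v1 x := by
    intro a b u v ha hb hu hv huv
    have huA : u ∉ A := fun h => by
      have : u ∈ f a ∩ A := ⟨hu, h⟩
      rw [ha] at this; exact this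
    have hvB : v ∈ B := by
      by_contra h; exact hsep _ _ huA h huv
    obtain ⟨t, ht, h⟩ := rep b hb v hv
    have htB : t ∈ B := by
      rcases h with ⟨_, rfl⟩ | ⟨_, h⟩
      · exact hvB
      · exact h
    refine ⟨φ t, ?_, hv1T t ht.2 htB⟩
    rw [gneg b hb]; exact Set.mem_image_of_mem _ ht
  refine ⟨g, ?_, ?_, ?_, ?_⟩
  · intro a
    by_cases ha : f a ∩ A = ∅
    · rw [gpos a ha]; exact Set.singleton_nonempty _
    · rw [gneg a ha]; exact (Set.nonempty_iff_ne_empty.mpr ha).image _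
  · intro a
    by_cases ha : f a ∩ A = ∅
    · rw [gpos a ha]
      haveI : Nonempty ({v1} : Set V1) := ⟨⟨v1, rfl⟩⟩
      refine SimpleGraph.Connected.mk ?_
      intro x y
      have : x = y := Subtype.ext (by rw [x.2, y.2])
      rw [this]
    · rw [gneg a ha]
      haveI : Nonempty (φ '' (f a ∩ A)) := ((Set.nonempty_iff_ne_empty.mpr ha).image _).to_subtype
      refine SimpleGraph.Connected.mk ?_
      rintro ⟨_, x, hx, rfl⟩ ⟨_, y, hy, rfl⟩
      obtain ⟨t, ht, h, hr⟩ :=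
        proj_reach G G1 A B hAB hsep hT φ hφ (f a) (hconn a) x y hx.1 hx.2 hy.1
      rcases h with ⟨_, rfl⟩ | ⟨h, _⟩
      · exact hr
      · exact absurd hy.2 h
  · intro a b hab
    by_cases ha : f a ∩ A = ∅ <;> by_cases hb : f b ∩ A = ∅
    · exact absurd (hsub a b ha hb) hab
    · simp only [gpos a ha, gneg b hb, Set.disjoint_singleton_left]
      rintro ⟨x, hx, h⟩; exact hv1 x hx.2 h
    · simp only [gneg a ha, gpos b hb, Set.disjoint_singleton_right]
      rintro ⟨x, hx, h⟩; exact hv1 x hx.2 h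
    · simp only [gneg a ha, gneg b hb]
      rw [Set.disjoint_left]
      rintro _ ⟨x, hx, rfl⟩ ⟨y, hy, h⟩
      have := hinj hy.2 hx.2 h
      subst this
      exact Set.disjoint_left.mp (hdisj hab) hx.1 hy.1
  · intro a b hab
    obtain ⟨u, hu, v, hv, huv⟩ := hadj a b hab
    by_cases ha : f a ∩ A = ∅ <;> by_cases hb : f b ∩ A = ∅
    · exact absurd (hsub a b ha hb) hab.ne
    · obtain ⟨x, hx, h⟩ := edge1 a b u v ha hb hu hv huv
      exact ⟨v1, by rw [gpos a ha]; rfl, x, hx, h⟩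
    · obtain ⟨x, hx, h⟩ := edge1 b a v u hb ha hv hu huv.symm
      exact ⟨x, hx, v1, by rw [gpos b hb]; rfl, h.symm⟩
    · obtain ⟨s, hs, hs'⟩ := rep a ha u hu
      obtain ⟨t, ht, ht'⟩ := rep b hb v hv
      have hst : s ≠ t := fun h => Set.disjoint_left.mp (hdisj hab.ne) hs.1 (h ▸ ht.1)
      refine ⟨φ s, by rw [gneg a ha]; exact Set.mem_image_of_mem _ hs, φ t,
        by rw [gneg b hb]; exact Set.mem_image_of_mem _ ht, hφ s t hs.2 ht.2 ?_⟩
      have h1 : u ∉ A → v ∈ B := fun h => by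
        by_contra h'; exact hsep _ _ h h' huv
      have h2 : v ∉ A → u ∈ B := fun h => by
        by_contra h'; exact hsep _ _ h h' huv.symm
      rcases hs' with ⟨huA, rfl⟩ | ⟨huA, hsB⟩ <;> rcases ht' with ⟨hvA, rfl⟩ | ⟨hvA, htB⟩
      · exact huv
      · exact hT _ _ hs.2 (h2 hvA) ht.2 htB hst
      · exact hT _ _ hs.2 hsB ht.2 (h1 huA) hst
      · exact hT _ _ hs.2 hsB ht.2 htB hst

/-- Patterns that cannot be split in the middle by a clique cut. -/
def Tight {α : Type*} (H : SimpleGraph α) : Prop :=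
  ∀ a a' b b', a ≠ a' → b ≠ b' → a ≠ b → a ≠ b' → a' ≠ b → a' ≠ b' →
    H.Adj a b ∨ H.Adj a b' ∨ H.Adj a' b ∨ H.Adj a' b'

lemma glue {α V V1 V2 : Type*} (H : SimpleGraph α) (hH : Tight H)
    (G : SimpleGraph V) (G1 : SimpleGraph V1) (G2 : SimpleGraph V2)
    (A B : Set V) (hAB : ∀ x, x ∈ A ∨ x ∈ B)
    (hsep : ∀ x y, x ∉ A → y ∉ B → ¬ G.Adj x y)
    (hT : ∀ x y, x ∈ A → x ∈ B → y ∈ A → y ∈ B → x ≠ y → G.Adj x y)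
    (φ : V → V1) (v1 : V1) (hinj : Set.InjOn φ A)
    (hv1 : ∀ x ∈ A, φ x ≠ v1)
    (hφ : ∀ x y, x ∈ A → y ∈ A → G.Adj x y → G1.Adj (φ x) (φ y))
    (hv1T : ∀ x, x ∈ A → x ∈ B → G1.Adj v1 (φ x))
    (ψ : V → V2) (v2 : V2) (hinj2 : Set.InjOn ψ B)
    (hv2 : ∀ x ∈ B, ψ x ≠ v2)
    (hψ : ∀ x y, x ∈ B → y ∈ B → G.Adj x y → G2.Adj (ψ x) (ψ y))
    (hv2T : ∀ x, x ∈ A → x ∈ B → G2.Adj v2 (ψ x))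
    (hm : IsMinor H G) : IsMinor H G1 ∨ IsMinor H G2 := by
  obtain ⟨f, hne, hconn, hdisj, hadj⟩ := hm
  by_cases h1 : ∀ a b, f a ∩ A = ∅ → f b ∩ A = ∅ → a = b
  · exact Or.inl (one_side H G G1 A B hAB hsep hT φ v1 hinj hv1 hφ hv1T f hconn hdisj hadj h1)
  by_cases h2 : ∀ a b, f a ∩ B = ∅ → f b ∩ B = ∅ → a = b
  · exact Or.inr (one_side H G G2 B A (fun x => (hAB x).symm)
      (fun x y hx hy h => hsep y x hy hx h.symm)
      (fun x y hx hx' hy hy' => hT x y hx' hx hy' hy) ψ v2 hinj2 hv2 hψ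
      (fun x hx hx' => hv2T x hx' hx) f hconn hdisj hadj h2)
  exfalso
  push Not at h1 h2
  obtain ⟨a, a', ha, ha', haa⟩ := h1
  obtain ⟨b, b', hb, hb', hbb⟩ := h2
  have ne : ∀ a b, f a ∩ A = ∅ → f b ∩ B = ∅ → a ≠ b := by
    rintro a _ ha hb rfl
    obtain ⟨x, hx⟩ := hne a
    rcases hAB x with h | h
    · exact (Set.eq_empty_iff_forall_notMem.mp ha) x ⟨hx, h⟩
    · exact (Set.eq_empty_iff_forall_notMem.mp hb) x ⟨hx, h⟩
  have nadj : ∀ a b, f a ∩ A = ∅ → f b ∩ B = ∅ → ¬ H.Adj a b := by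
    intro a b ha hb h
    obtain ⟨u, hu, v, hv, huv⟩ := hadj a b h
    exact hsep u v (fun h => (Set.eq_empty_iff_forall_notMem.mp ha) u ⟨hu, h⟩)
      (fun h => (Set.eq_empty_iff_forall_notMem.mp hb) v ⟨hv, h⟩) huv
  rcases hH a a' b b' haa hbb (ne _ _ ha hb) (ne _ _ ha hb') (ne _ _ ha' hb) (ne _ _ ha' hb')
    with h | h | h | h
  · exact nadj _ _ ha hb h
  · exact nadj _ _ ha hb' h
  · exact nadj _ _ ha' hb h
  · exact nadj _ _ ha' hb' h

lemma IsMinor.map {α V V1 : Type*} {H : SimpleGraph α} {G : SimpleGraph V} {G1 : SimpleGraph V1}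
    (φ : V → V1) (hinj : Function.Injective φ) (hφ : ∀ x y, G.Adj x y → G1.Adj (φ x) (φ y))
    (hm : IsMinor H G) : IsMinor H G1 := by
  obtain ⟨f, hne, hconn, hdisj, hadj⟩ := hm
  refine ⟨fun a => φ '' f a, fun a => (hne a).image _, fun a => ?_, fun a b hab => ?_, ?_⟩
  · haveI : Nonempty (φ '' f a) := ((hne a).image _).to_subtype
    refine SimpleGraph.Connected.mk ?_
    rintro ⟨_, x, hx, rfl⟩ ⟨_, y, hy, rfl⟩
    have := (hconn a).preconnected ⟨x, hx⟩ ⟨y, hy⟩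
    let F : G.induce (f a) →g G1.induce (φ '' f a) :=
      ⟨fun z => ⟨φ z.1, Set.mem_image_of_mem _ z.2⟩, fun {p q} h => hφ p.1 q.1 h⟩
    exact this.map F
  · exact (Set.disjoint_image_iff hinj).mpr (hdisj hab)
  · intro a b hab
    obtain ⟨u, hu, v, hv, h⟩ := hadj a b hab
    exact ⟨_, Set.mem_image_of_mem _ hu, _, Set.mem_image_of_mem _ hv, hφ _ _ h⟩

lemma tight_K5 : Tight (⊤ : SimpleGraph (Fin 5)) := by
  intro a a' b b' _ _ h _ _ _
  exact Or.inl h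

lemma tight_K33 : Tight (completeBipartiteGraph (Fin 3) (Fin 3)) := by
  intro a a' b b' h1 h2 h3 h4 h5 h6
  rcases a with a | a <;> rcases a' with a' | a' <;> rcases b with b | b <;>
    rcases b' with b' | b' <;> simp at * <;> omega

/-- Octahedron with two opposite faces stacked. -/
def h8 (i j : Fin 8) : Bool :=
  (i.1 < 6 && j.1 < 6 && i.1 % 3 != j.1 % 3) ||
  (i.1 < 3 && j.1 == 6) || (j.1 < 3 && i.1 == 6) ||
  (3 ≤ i.1 && i.1 < 6 && j.1 == 7) || (3 ≤ j.1 && j.1 < 6 && i.1 == 7)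

def H8 : SimpleGraph (Fin 8) where
  Adj i j := h8 i j = true
  symm := ⟨by decide⟩
  loopless := ⟨by decide⟩

/-- Nested triangles with a stacked last triangle. -/
def qadj (n : ℕ) : Option (ℕ × Fin 3) → Option (ℕ × Fin 3) → Prop
  | some (i, k), some (j, l) => i < n ∧ j < n ∧ k ≠ l ∧ i ≤ j + 1 ∧ j ≤ i + 1
  | none, some (i, _) => i + 1 = n
  | some (i, _), none => i + 1 = n
  | none, none => False

def Q (n : ℕ) : SimpleGraph (Option (ℕ × Fin 3)) where
  Adj := qadj n
  symm := ⟨by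
    rintro (_ | ⟨i, k⟩) (_ | ⟨j, l⟩) <;> simp only [qadj] <;> grind⟩
  loopless := ⟨by
    rintro (_ | ⟨i, k⟩) <;> simp [qadj]⟩

lemma Q_free {α : Type*} (H : SimpleGraph α) (hH : Tight H) (h8 : ¬ IsMinor H H8)
    (hE : ∃ a b, H.Adj a b) (n : ℕ) : ¬ IsMinor H (Q n) := by
  induction n with
  | zero =>
    rintro ⟨f, _, _, _, h⟩
    obtain ⟨a, b, hab⟩ := hE
    obtain ⟨u, _, v, _, huv⟩ := h a b hab
    rcases u with _ | ⟨i, k⟩ <;> rcases v with _ | ⟨j, l⟩ <;> simp [Q, qadj] at huv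
  | succ n ih =>
    intro hm
    have := glue H hH (Q (n + 1)) (Q n) H8
      {x | match x with
        | none => False
        | some (i, _) => i ≠ n}
      {x | match x with
        | none => True
        | some (i, _) => i = n ∨ i + 1 = n}
      (by rintro (_ | ⟨i, k⟩) <;> simp; tauto)
      (by rintro (_ | ⟨i, k⟩) (_ | ⟨j, l⟩) <;> simp [Q, qadj] <;> omega)
      (by rintro (_ | ⟨i, k⟩) (_ | ⟨j, l⟩) <;> simp [Q, qadj] <;> grind)
      id none (Function.injective_id.injOn)
      (by rintro (_ | ⟨i, k⟩) <;> simp)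
      (by rintro (_ | ⟨i, k⟩) (_ | ⟨j, l⟩) <;> simp [Q, qadj] <;> omega)
      (by rintro (_ | ⟨i, k⟩) <;> simp [Q, qadj] <;> omega)
      (fun x => match x with
        | none => 7
        | some (i, k) => if i = n then ⟨3 + k.1, by omega⟩ else ⟨k.1, by omega⟩)
      6
      (by
        rintro (_ | ⟨i, k⟩) hx (_ | ⟨j, l⟩) hy <;> simp at * <;> grind)
      (by
        rintro (_ | ⟨i, k⟩) hx <;> simp at * <;> grind)
      (by
        rintro (_ | ⟨i, k⟩) (_ | ⟨j, l⟩) hx hy <;> simp [Q, qadj, H8, _root_.h8] at * <;> grind)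
      (by
        rintro (_ | ⟨i, k⟩) hx hy <;> simp [H8, _root_.h8] at * <;> grind)
      hm
    exact this.elim ih h8

/-- Neighbourhood of a bit mask of vertices of `H8`. -/
def nbm (m : ℕ) : ℕ :=
  Nat.ofBits (fun j : Fin 8 => decide (∃ i : Fin 8, m.testBit i.1 = true ∧ h8 i j = true))

/-- Nonempty masks without isolated vertices, unless they are singletons. -/
def goodMask (m : ℕ) : Prop :=
  m ≠ 0 ∧ ∀ i : Fin 8, m.testBit i.1 = true →
    (∃ j : Fin 8, m.testBit j.1 = true ∧ h8 i j = true) ∨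
      ∀ j : Fin 8, m.testBit j.1 = true → j = i

instance (m : ℕ) : Decidable (goodMask m) := by unfold goodMask; infer_instance

/-- All good masks together with their neighbourhoods. -/
def maskList : List (ℕ × ℕ) :=
  [(255, 255), (127, 255), (191, 255), (223, 255), (239, 255), (247, 255), (251, 255),
   (253, 255), (254, 255), (63, 255), (95, 255), (111, 255), (119, 255), (123, 255), (125, 255),
   (126, 255), (159, 255), (175, 255), (183, 255), (187, 255), (189, 255), (190, 255),
   (207, 255), (215, 255), (219, 255), (221, 255), (222, 255), (231, 255), (235, 255),
   (237, 255), (238, 255), (243, 255), (245, 255), (246, 255), (249, 255), (250, 255),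
   (252, 255), (31, 255), (47, 255), (55, 255), (59, 255), (61, 255), (62, 255), (79, 255),
   (87, 255), (91, 255), (93, 255), (94, 255), (103, 255), (107, 255), (109, 255), (110, 255),
   (115, 255), (117, 255), (118, 255), (121, 255), (122, 255), (124, 255), (143, 255),
   (151, 255), (155, 255), (157, 255), (158, 255), (167, 255), (171, 255), (173, 255),
   (174, 255), (179, 255), (181, 255), (182, 255), (185, 255), (186, 255), (188, 255),
   (203, 255), (205, 255), (206, 255), (211, 255), (213, 255), (214, 255), (217, 255),
   (218, 255), (220, 255), (227, 255), (229, 255), (230, 255), (233, 255), (234, 255),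
   (236, 255), (241, 255), (242, 255), (244, 255), (15, 255), (23, 255), (27, 255), (29, 255),
   (30, 255), (39, 255), (43, 255), (45, 255), (46, 255), (51, 255), (53, 255), (54, 255),
   (57, 255), (58, 255), (60, 255), (71, 127), (75, 255), (77, 255), (78, 255), (83, 255),
   (85, 255), (86, 255), (89, 255), (90, 255), (92, 255), (99, 255), (101, 255), (102, 255),
   (105, 255), (106, 255), (108, 255), (113, 255), (114, 255), (116, 255), (139, 255),
   (141, 255), (142, 255), (147, 255), (149, 255), (150, 255), (153, 255), (154, 255),
   (156, 255), (163, 255), (165, 255), (166, 255), (169, 255), (170, 255), (172, 255),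
   (177, 255), (178, 255), (180, 255), (184, 191), (201, 255), (202, 255), (204, 255),
   (209, 255), (210, 255), (212, 255), (225, 255), (226, 255), (228, 255), (7, 127), (11, 255),
   (13, 255), (14, 255), (19, 255), (21, 255), (22, 255), (25, 255), (26, 255), (28, 255),
   (35, 255), (37, 255), (38, 255), (41, 255), (42, 255), (44, 255), (49, 255), (50, 255),
   (52, 255), (56, 191), (67, 127), (69, 127), (70, 127), (74, 255), (76, 255), (81, 255),
   (84, 255), (97, 255), (98, 255), (138, 255), (140, 255), (145, 255), (148, 255), (152, 191),
   (161, 255), (162, 255), (168, 191), (176, 191), (3, 127), (5, 127), (6, 127), (10, 255),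
   (12, 255), (17, 255), (20, 255), (24, 191), (33, 255), (34, 255), (40, 191), (48, 191),
   (65, 119), (66, 111), (68, 95), (136, 190), (144, 189), (160, 187), (1, 118), (2, 109),
   (4, 91), (8, 182), (16, 173), (32, 155), (64, 7), (128, 56)]

lemma mem_maskList_aux : ∀ m < 256, goodMask m →
    maskList.any (fun y => Nat.beq y.1 m && Nat.beq y.2 (nbm m)) = true := by
  decide +kernel

lemma mem_maskList : ∀ m < 256, goodMask m → (m, nbm m) ∈ maskList := by
  intro m hm hg
  obtain ⟨⟨a, b⟩, hy, h⟩ := List.any_eq_true.mp (mem_maskList_aux m hm hg)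
  rw [Bool.and_eq_true, Nat.beq_eq, Nat.beq_eq] at h
  obtain ⟨h1, h2⟩ := h
  rwa [← h2, ← h1]

def disjM (x y : ℕ × ℕ) : Bool := Nat.beq (Nat.land x.1 y.1) 0

def touchM (x y : ℕ × ℕ) : Bool := disjM x y && !(Nat.beq (Nat.land x.2 y.1) 0)

/-- There is no `k`-element clique of the relation `R` in the list `L`. -/
def noCl (R : ℕ × ℕ → ℕ × ℕ → Bool) : ℕ → List (ℕ × ℕ) → Bool
  | 0, _ => false
  | k + 1, L => L.tails.all fun l => match l with
    | [] => true
    | x :: xs => noCl R k (xs.filter (R x))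

/-- There is no `K_{k,3}` model with the `k`-side in `L` and the `3`-side in `D`. -/
def noBip : ℕ → List (ℕ × ℕ) → List (ℕ × ℕ) → Bool
  | 0, _, D => noCl disjM 3 D
  | k + 1, L, D => L.tails.all fun l => match l with
    | [] => true
    | x :: xs => noBip k (xs.filter (disjM x)) (D.filter (touchM x))

lemma exists_tail (L : List (ℕ × ℕ)) (S : Finset (ℕ × ℕ)) (hS : S.Nonempty)
    (h : ∀ x ∈ S, x ∈ L) :
    ∃ x xs, (x :: xs) ∈ L.tails ∧ x ∈ S ∧ ∀ y ∈ S.erase x, y ∈ xs := by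
  induction L with
  | nil => obtain ⟨x, hx⟩ := hS; simpa using h x hx
  | cons a l ih =>
    by_cases ha : a ∈ S
    · refine ⟨a, l, by simp, ha, fun y hy => ?_⟩
      rw [Finset.mem_erase] at hy
      exact (List.mem_cons.mp (h y hy.2)).resolve_left hy.1
    · obtain ⟨x, xs, h1, h2, h3⟩ := ih (fun x hx =>
        (List.mem_cons.mp (h x hx)).resolve_left (fun e => ha (e ▸ hx)))
      exact ⟨x, xs, by rw [List.tails]; exact List.mem_cons_of_mem _ h1, h2, h3⟩

lemma noCl_sound (R : ℕ × ℕ → ℕ × ℕ → Bool) (k : ℕ) (L : List (ℕ × ℕ)) (S : Finset (ℕ × ℕ))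
    (hk : S.card = k) (h : ∀ x ∈ S, x ∈ L) (hR : ∀ x ∈ S, ∀ y ∈ S, x ≠ y → R x y = true) :
    noCl R k L = false := by
  induction k generalizing L S with
  | zero => rfl
  | succ k ih =>
    obtain ⟨x, xs, h1, h2, h3⟩ := exists_tail L S (Finset.card_pos.mp (by omega)) h
    have := ih (xs.filter (R x)) (S.erase x) (by rw [Finset.card_erase_of_mem h2]; omega)
      (fun y hy => List.mem_filter.mpr ⟨h3 y hy,
        hR x h2 y (Finset.mem_of_mem_erase hy) (Finset.ne_of_mem_erase hy).symm⟩)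
      (fun y hy z hz => hR y (Finset.mem_of_mem_erase hy) z (Finset.mem_of_mem_erase hz))
    rw [noCl, List.all_eq_false]
    exact ⟨_, h1, by simp [this]⟩

lemma noBip_sound (k : ℕ) (L D : List (ℕ × ℕ)) (S E : Finset (ℕ × ℕ))
    (hk : S.card = k) (hE : E.card = 3) (h : ∀ x ∈ S, x ∈ L) (hD : ∀ x ∈ E, x ∈ D)
    (hS : ∀ x ∈ S, ∀ y ∈ S, x ≠ y → disjM x y = true)
    (hEE : ∀ x ∈ E, ∀ y ∈ E, x ≠ y → disjM x y = true)
    (hSE : ∀ x ∈ S, ∀ y ∈ E, touchM x y = true) :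
    noBip k L D = false := by
  induction k generalizing L D S with
  | zero => exact noCl_sound _ 3 D E hE hD hEE
  | succ k ih =>
    obtain ⟨x, xs, h1, h2, h3⟩ := exists_tail L S (Finset.card_pos.mp (by omega)) h
    have := ih (xs.filter (disjM x)) (D.filter (touchM x)) (S.erase x)
      (by rw [Finset.card_erase_of_mem h2]; omega)
      (fun y hy => List.mem_filter.mpr ⟨h3 y hy,
        hS x h2 y (Finset.mem_of_mem_erase hy) (Finset.ne_of_mem_erase hy).symm⟩)
      (fun y hy => List.mem_filter.mpr ⟨hD y hy, hSE x h2 y hy⟩)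
      (fun y hy z hz => hS y (Finset.mem_of_mem_erase hy) z (Finset.mem_of_mem_erase hz))
      (fun y hy => hSE y (Finset.mem_of_mem_erase hy))
    rw [noBip, List.all_eq_false]
    exact ⟨_, h1, by simp [this]⟩

lemma noCl_run : noCl touchM 5 maskList = true := by decide +kernel

lemma noBip_run : noBip 3 maskList maskList = true := by decide +kernel

open Classical in
/-- Bit mask of a set of vertices. -/
noncomputable def maskOf (s : Set (Fin 8)) : ℕ := Nat.ofBits (fun i : Fin 8 => decide (i ∈ s))

lemma testBit_maskOf (s : Set (Fin 8)) (i : Fin 8) :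
    (maskOf s).testBit i.1 = true ↔ i ∈ s := by
  simp [maskOf, Nat.testBit_ofBits_lt _ i.1 i.2]

lemma maskOf_lt (s : Set (Fin 8)) : maskOf s < 256 := Nat.ofBits_lt_two_pow _

lemma maskOf_mem (s : Set (Fin 8)) (hs : s.Nonempty) (hc : (H8.induce s).Connected) :
    (maskOf s, nbm (maskOf s)) ∈ maskList := by
  apply mem_maskList _ (maskOf_lt s)
  refine ⟨?_, ?_⟩
  · intro h
    obtain ⟨i, hi⟩ := hs
    rw [← testBit_maskOf, h] at hi
    simp at hi
  · intro i hi
    rw [testBit_maskOf] at hi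
    by_cases hj : ∀ j ∈ s, j = i
    · right; intro j h; exact hj j ((testBit_maskOf s j).mp h)
    · left
      push Not at hj
      obtain ⟨j, hj, hji⟩ := hj
      have hr := hc.preconnected ⟨i, hi⟩ ⟨j, hj⟩
      rw [SimpleGraph.reachable_iff_reflTransGen] at hr
      rcases hr.cases_head with h | ⟨c, h, _⟩
      · exact absurd (congrArg Subtype.val h).symm hji
      · exact ⟨c.1, (testBit_maskOf s c.1).mpr c.2, h⟩

lemma disjM_maskOf (s t : Set (Fin 8)) (h : Disjoint s t) :
    disjM (maskOf s, nbm (maskOf s)) (maskOf t, nbm (maskOf t)) = true := by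
  rw [disjM, Nat.beq_eq]
  change maskOf s &&& maskOf t = 0
  apply Nat.eq_of_testBit_eq
  intro i
  rw [Nat.testBit_and, Nat.zero_testBit]
  by_contra hne
  rw [Bool.not_eq_false, Bool.and_eq_true] at hne
  by_cases hi : i < 8
  · exact Set.disjoint_left.mp h ((testBit_maskOf s ⟨i, hi⟩).mp hne.1)
      ((testBit_maskOf t ⟨i, hi⟩).mp hne.2)
  · have := hne.1
    rw [maskOf, Nat.testBit_ofBits_ge _ _ (by omega)] at this
    cases this

lemma touchM_maskOf (s t : Set (Fin 8)) (h : Disjoint s t)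
    (hst : ∃ u ∈ s, ∃ v ∈ t, H8.Adj u v) :
    touchM (maskOf s, nbm (maskOf s)) (maskOf t, nbm (maskOf t)) = true := by
  rw [touchM, disjM_maskOf s t h, Bool.true_and, Bool.not_eq_true', ← Bool.not_eq_true, Nat.beq_eq]
  change ¬ (nbm (maskOf s) &&& maskOf t = 0)
  intro h0
  obtain ⟨u, hu, v, hv, huv⟩ := hst
  have := congrArg (fun m => m.testBit v.1) h0
  simp only [Nat.testBit_and, Nat.zero_testBit] at this
  rw [(testBit_maskOf t v).mpr hv, nbm, Nat.testBit_ofBits_lt _ v.1 v.2, Bool.and_true,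
    decide_eq_false_iff_not] at this
  exact this ⟨u, (testBit_maskOf s u).mpr hu, huv⟩

lemma maskOf_inj : Function.Injective fun s => (maskOf s, nbm (maskOf s)) := by
  intro s t h
  have h' : maskOf s = maskOf t := (Prod.ext_iff.mp h).1
  ext i
  rw [← testBit_maskOf, ← testBit_maskOf, h']

lemma branch_inj {α : Type*} (f : α → Set (Fin 8)) (hne : ∀ a, (f a).Nonempty)
    (hd : Pairwise fun a b => Disjoint (f a) (f b)) : Function.Injective f := by
  intro a b h
  by_contra hab
  have := hd hab
  simp only [h, disjoint_self] at this
  exact (hne b).ne_empty this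

lemma H8_K5 : ¬ IsMinor (⊤ : SimpleGraph (Fin 5)) H8 := by
  rintro ⟨f, hne, hconn, hdisj, hadj⟩
  have hinj := maskOf_inj.comp (branch_inj f hne hdisj)
  have := noCl_sound touchM 5 maskList (Finset.univ.image _)
    (by rw [Finset.card_image_of_injective _ hinj]; simp)
    (by
      intro x hx
      obtain ⟨a, -, rfl⟩ := Finset.mem_image.mp hx
      exact maskOf_mem _ (hne a) (hconn a))
    (by
      intro x hx y hy hxy
      obtain ⟨a, -, rfl⟩ := Finset.mem_image.mp hx
      obtain ⟨b, -, rfl⟩ := Finset.mem_image.mp hy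
      have hab : a ≠ b := fun h => hxy (by rw [h])
      exact touchM_maskOf _ _ (hdisj hab) (hadj a b hab))
  rw [noCl_run] at this
  cases this

lemma H8_K33 : ¬ IsMinor (completeBipartiteGraph (Fin 3) (Fin 3)) H8 := by
  rintro ⟨f, hne, hconn, hdisj, hadj⟩
  have hinj := maskOf_inj.comp (branch_inj f hne hdisj)
  have hl := hinj.comp Sum.inl_injective
  have hr := hinj.comp Sum.inr_injective
  have := noBip_sound 3 maskList maskList (Finset.univ.image _) (Finset.univ.image _)
    (by rw [Finset.card_image_of_injective _ hl]; simp)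
    (by rw [Finset.card_image_of_injective _ hr]; simp)
    (by
      intro x hx
      obtain ⟨a, -, rfl⟩ := Finset.mem_image.mp hx
      exact maskOf_mem _ (hne _) (hconn _))
    (by
      intro x hx
      obtain ⟨a, -, rfl⟩ := Finset.mem_image.mp hx
      exact maskOf_mem _ (hne _) (hconn _))
    (by
      intro x hx y hy hxy
      obtain ⟨a, -, rfl⟩ := Finset.mem_image.mp hx
      obtain ⟨b, -, rfl⟩ := Finset.mem_image.mp hy
      have hab : a ≠ b := fun h => hxy (by rw [h])
      exact disjM_maskOf _ _ (hdisj (fun h => hab (Sum.inl_injective h))))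
    (by
      intro x hx y hy hxy
      obtain ⟨a, -, rfl⟩ := Finset.mem_image.mp hx
      obtain ⟨b, -, rfl⟩ := Finset.mem_image.mp hy
      have hab : a ≠ b := fun h => hxy (by rw [h])
      exact disjM_maskOf _ _ (hdisj (fun h => hab (Sum.inr_injective h))))
    (by
      intro x hx y hy
      obtain ⟨a, -, rfl⟩ := Finset.mem_image.mp hx
      obtain ⟨b, -, rfl⟩ := Finset.mem_image.mp hy
      exact touchM_maskOf _ _ (hdisj Sum.inl_ne_inr) (hadj _ _ (by simp)))
  rw [noBip_run] at this
  cases this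

/-- The nested triangles graph. -/
def tube (n : ℕ) : SimpleGraph (Fin n × Fin 3) where
  Adj p q := p.2 ≠ q.2 ∧ p.1.1 ≤ q.1.1 + 1 ∧ q.1.1 ≤ p.1.1 + 1
  symm := ⟨fun _ _ h => ⟨h.1.symm, h.2.2, h.2.1⟩⟩
  loopless := ⟨fun _ h => h.1 rfl⟩

lemma tube_free (n : ℕ) {α : Type*} (H : SimpleGraph α) (h : ¬ IsMinor H (Q n)) :
    ¬ IsMinor H (tube n) := by
  intro hm
  refine h (hm.map (fun p => some (p.1.1, p.2)) ?_ ?_)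
  · rintro ⟨⟨i, hi⟩, k⟩ ⟨⟨j, hj⟩, l⟩ h
    simpa using h
  · rintro ⟨⟨i, hi⟩, k⟩ ⟨⟨j, hj⟩, l⟩ h
    exact ⟨hi, hj, h⟩

lemma tube_planar (n : ℕ) : Planar (tube n) :=
  ⟨tube_free n _ (Q_free _ tight_K5 H8_K5 ⟨0, 1, by simp⟩ n),
    tube_free n _ (Q_free _ tight_K33 H8_K33 ⟨Sum.inl 0, Sum.inr 0, by simp⟩ n)⟩

lemma tube_snd_inj (n : ℕ) (s : Finset (Fin n × Fin 3)) (hs : (tube n).IsClique ↑s) :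
    Set.InjOn Prod.snd (s : Set (Fin n × Fin 3)) := by
  intro p hp q hq h
  by_contra hne
  exact (hs hp hq hne).1 h

lemma tube_clique (n : ℕ) (s : Finset (Fin n × Fin 3)) (hs : (tube n).IsClique ↑s) :
    s.card ≤ 3 := by
  have := Finset.card_le_card_of_injOn (t := (Finset.univ : Finset (Fin 3))) Prod.snd
    (fun _ _ => by simp) (tube_snd_inj n s hs)
  simpa using this

/-- Level triples of triangles. -/
def lev (n : ℕ) : Finset (ℕ × ℕ × ℕ) :=
  (Finset.range n ×ˢ Finset.range n ×ˢ Finset.range n).filter fun x =>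
    x.1 ≤ x.2.1 + 1 ∧ x.2.1 ≤ x.1 + 1 ∧ x.1 ≤ x.2.2 + 1 ∧ x.2.2 ≤ x.1 + 1 ∧
      x.2.1 ≤ x.2.2 + 1 ∧ x.2.2 ≤ x.2.1 + 1

def newLev (n : ℕ) : Finset (ℕ × ℕ × ℕ) :=
  {(n + 1, n + 1, n + 1), (n, n + 1, n + 1), (n + 1, n, n + 1), (n + 1, n + 1, n),
    (n, n, n + 1), (n, n + 1, n), (n + 1, n, n)}

lemma card_lev (n : ℕ) : (lev (n + 1)).card = 7 * n + 1 := by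
  induction n with
  | zero => decide
  | succ n ih =>
    have h1 : lev (n + 1 + 1) = lev (n + 1) ∪ newLev n := by
      ext ⟨a, b, c⟩
      simp only [lev, newLev, Finset.mem_filter, Finset.mem_product, Finset.mem_range,
        Finset.mem_union, Finset.mem_insert, Finset.mem_singleton, Prod.mk.injEq]
      constructor
      · rintro ⟨⟨ha, hb, hc⟩, h⟩
        by_cases hlt : a < n + 1 ∧ b < n + 1 ∧ c < n + 1
        · exact Or.inl ⟨hlt, h⟩
        · right
          have ha' : a = n ∨ a = n + 1 := by omega
          have hb' : b = n ∨ b = n + 1 := by omega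
          have hc' : c = n ∨ c = n + 1 := by omega
          clear h ha hb hc
          rcases ha' with rfl | rfl <;> rcases hb' with rfl | rfl <;>
            rcases hc' with rfl | rfl <;> simp_all
      · rintro (⟨⟨ha, hb, hc⟩, h⟩ | h)
        · exact ⟨⟨by omega, by omega, by omega⟩, h⟩
        · rcases h with h | h | h | h | h | h | h <;> obtain ⟨rfl, rfl, rfl⟩ := h <;> omega
    have h2 : Disjoint (lev (n + 1)) (newLev n) := by
      rw [Finset.disjoint_left]
      rintro ⟨a, b, c⟩
      simp only [lev, newLev, Finset.mem_filter, Finset.mem_product, Finset.mem_range,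
        Finset.mem_insert, Finset.mem_singleton, Prod.mk.injEq]
      rintro ⟨⟨ha, hb, hc⟩, -⟩ h
      rcases h with h | h | h | h | h | h | h <;> obtain ⟨h1, h2, h3⟩ := h <;> omega
    have h3 : (newLev n).card = 7 := by
      unfold newLev
      repeat rw [Finset.card_insert_of_notMem (by simp)]
      simp
    rw [h1, Finset.card_union_of_disjoint h2, ih, h3]
    ring

/-- Levels of a triangle. -/
def triOf (n : ℕ) (x : Fin 3 → Fin n) : Finset (Fin n × Fin 3) :=
  Finset.univ.image fun k => (x k, k)

lemma triOf_inj (n : ℕ) : Function.Injective (triOf n) := by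
  intro x y h
  funext k
  have : (x k, k) ∈ triOf n y := by rw [← h]; simp [triOf]
  simp only [triOf, Finset.mem_image, Finset.mem_univ, true_and, Prod.mk.injEq] at this
  obtain ⟨l, h1, rfl⟩ := this
  exact h1.symm

def goodLev (n : ℕ) : Set (Fin 3 → Fin n) := {x | ∀ k l, (x k).1 ≤ (x l).1 + 1}

lemma tri_eq (n : ℕ) :
    {s : Finset (Fin n × Fin 3) | s.card = 3 ∧ (tube n).IsClique ↑s} = triOf n '' goodLev n := by
  ext s
  constructor
  · rintro ⟨hc, hs⟩
    have hinj := tube_snd_inj n s hs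
    have himg : s.image Prod.snd = Finset.univ := by
      rw [← Finset.card_eq_iff_eq_univ, Finset.card_image_of_injOn hinj, hc]; rfl
    have hex : ∀ k : Fin 3, ∃ i : Fin n, (i, k) ∈ s := by
      intro k
      have : k ∈ s.image Prod.snd := by rw [himg]; simp
      obtain ⟨⟨i, l⟩, h, rfl⟩ := Finset.mem_image.mp this
      exact ⟨i, h⟩
    choose x hx using hex
    refine ⟨x, ?_, ?_⟩
    · intro k l
      by_cases hkl : k = l
      · subst hkl; omega
      · exact (hs (hx k) (hx l) (by simp [hkl])).2.1
    · ext ⟨i, k⟩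
      simp only [triOf, Finset.mem_image, Finset.mem_univ, true_and, Prod.mk.injEq]
      constructor
      · rintro ⟨l, rfl, rfl⟩; exact hx l
      · intro h; exact ⟨k, congrArg Prod.fst (hinj (hx k) h rfl), rfl⟩
  · rintro ⟨x, hx, rfl⟩
    constructor
    · rw [triOf, Finset.card_image_of_injective _ (fun k l h => (Prod.ext_iff.mp h).2)]; rfl
    · intro p hp q hq hpq
      simp only [triOf, Finset.coe_image, Finset.coe_univ, Set.image_univ, Set.mem_range] at hp hq
      obtain ⟨k, rfl⟩ := hp
      obtain ⟨l, rfl⟩ := hq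
      refine ⟨fun h => hpq ?_, hx k l, hx l k⟩
      have h : k = l := h
      rw [h]

lemma tri_count (n : ℕ) (hn : 1 ≤ n) :
    {s : Finset (Fin n × Fin 3) | s.card = 3 ∧ (tube n).IsClique ↑s}.ncard = 7 * n - 6 := by
  rw [tri_eq, Set.ncard_image_of_injective _ (triOf_inj n)]
  have hi : Function.Injective
      (fun x : Fin 3 → Fin n => ((x 0).1, (x 1).1, (x 2).1)) := by
    intro x y h
    simp only [Prod.mk.injEq] at h
    funext k
    fin_cases k
    · exact Fin.ext h.1
    · exact Fin.ext h.2.1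
    · exact Fin.ext h.2.2
  rw [← Set.ncard_image_of_injective _ hi]
  have : (fun x : Fin 3 → Fin n => ((x 0).1, (x 1).1, (x 2).1)) '' goodLev n = ↑(lev n) := by
    ext ⟨a, b, c⟩
    simp only [Set.mem_image, goodLev, Set.mem_ofPred_eq, lev, Finset.coe_filter,
      Finset.mem_product, Finset.mem_range, Prod.mk.injEq]
    constructor
    · rintro ⟨x, hx, rfl, rfl, rfl⟩
      exact ⟨⟨(x 0).2, (x 1).2, (x 2).2⟩, hx _ _, hx _ _, hx _ _, hx _ _, hx _ _, hx _ _⟩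
    · rintro ⟨⟨ha, hb, hc⟩, h⟩
      refine ⟨![⟨a, ha⟩, ⟨b, hb⟩, ⟨c, hc⟩], ?_, rfl, rfl, rfl⟩
      intro k l
      fin_cases k <;> fin_cases l <;> simp <;> omega
  rw [this, Set.ncard_coe_finset]
  obtain ⟨m, rfl⟩ : ∃ m, n = m + 1 := ⟨n - 1, by omega⟩
  rw [card_lev]; omega

/-- A set of at most four vertices in a `K₄`-free graph contains at most two triangles. -/
lemma two_tri {V : Type*} (G : SimpleGraph V)
    (hK : ∀ s : Finset V, G.IsClique ↑s → s.card ≤ 3) (X : Finset V) (hX : X.card ≤ 4)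
    (F : Finset (Finset V)) (hF : ∀ s ∈ F, (s.card = 3 ∧ G.IsClique ↑s) ∧ s ⊆ X) :
    F.card ≤ 2 := by
  classical
  by_contra hcard
  obtain ⟨a, b, c, ha, hb, hc, hab, hac, hbc⟩ := Finset.two_lt_card_iff.mp (by omega : 2 < F.card)
  have h4 : X.card = 4 := by
    by_contra h
    have e : ∀ s ∈ F, s = X := fun s hs =>
      Finset.eq_of_subset_of_card_le (hF s hs).2 (by rw [(hF s hs).1.1]; omega)
    exact hab ((e a ha).trans (e b hb).symm)
  have miss : ∀ s ∈ F, ∃ x ∈ X, s = X.erase x := by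
    intro s hs
    have : (X \ s).card = 1 := by
      rw [Finset.card_sdiff_of_subset (hF s hs).2, h4, (hF s hs).1.1]
    obtain ⟨x, hx⟩ := Finset.card_eq_one.mp this
    have hxm : x ∈ X \ s := by rw [hx]; simp
    refine ⟨x, (Finset.mem_sdiff.mp hxm).1, ?_⟩
    rw [← Finset.sdiff_singleton_eq_erase, ← hx, Finset.sdiff_sdiff_eq_self (hF s hs).2]
  obtain ⟨x, hx, rfl⟩ := miss a ha
  obtain ⟨y, hy, rfl⟩ := miss b hb
  obtain ⟨z, hz, rfl⟩ := miss c hc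
  have hxy : x ≠ y := fun h => hab (by rw [h])
  have hxz : x ≠ z := fun h => hac (by rw [h])
  have hyz : y ≠ z := fun h => hbc (by rw [h])
  have : G.IsClique (X : Set V) := by
    intro u hu v hv huv
    have hu : u ∈ X := hu
    have hv : v ∈ X := hv
    have pick : ∀ w, X.erase w ∈ F → u ≠ w → v ≠ w → G.Adj u v := fun w hw h1 h2 =>
      (hF _ hw).1.2 (by simp [h1, hu]) (by simp [h2, hv]) huv
    by_cases h1 : u ≠ x ∧ v ≠ x
    · exact pick x ha h1.1 h1.2
    by_cases h2 : u ≠ y ∧ v ≠ y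
    · exact pick y hb h2.1 h2.2
    by_cases h3 : u ≠ z ∧ v ≠ z
    · exact pick z hc h3.1 h3.2
    exfalso; grind
  have := hK X this
  omega

/-- For every `n ≥ 1` there is a planar graph `Gₙ` with `3n` vertices, `7n − 6`
triangles, and no `K₄` subgraph, such that every strong ω-decomposition of `Gₙ` of
width 4 has order at least `(7/6)|V(Gₙ)| − 3`. -/
theorem stmt15 (n : ℕ) (hn : 1 ≤ n) :
    ∃ (V : Type) (G : SimpleGraph V),
      Nat.card V = 3 * n ∧
      Planar G ∧
      (∀ s : Finset V, G.IsClique ↑s → s.card ≤ 3) ∧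
      {s : Finset V | s.card = 3 ∧ G.IsClique ↑s}.ncard = 7 * n - 6 ∧
      ∀ (ι : Type u) [Finite ι] (D : SimpleGraph ι) (X : ι → Finset V),
        IsStrongDecomposition G D X →
        (∀ s : Finset V, G.IsClique ↑s → ∃ i, s ⊆ X i) →
        (∀ i, (X i).card ≤ 4) →
        (7 / 6 : ℝ) * (Nat.card V : ℝ) - 3 ≤ (Nat.card ι : ℝ) := by
  classical
  refine ⟨Fin n × Fin 3, tube n, by simp [mul_comm], tube_planar n, tube_clique n,
    tri_count n hn, ?_⟩
  intro ι _ D X _ hω hw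
  have : Fintype ι := Fintype.ofFinite ι
  set T : Finset (Finset (Fin n × Fin 3)) :=
    Finset.univ.filter fun s => s.card = 3 ∧ (tube n).IsClique ↑s with hT
  have hTc : T.card = 7 * n - 6 := by
    rw [← tri_count n hn, ← Set.ncard_coe_finset]
    congr 1
    ext s
    simp [hT]
  have hbag : ∀ s : Finset (Fin n × Fin 3), ∃ i, s ∈ T → s ⊆ X i := by
    intro s
    by_cases hs : s ∈ T
    · obtain ⟨i, hi⟩ := hω s (Finset.mem_filter.mp hs).2.2
      exact ⟨i, fun _ => hi⟩
    · obtain ⟨i, _⟩ := hω ∅ (by simp)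
      exact ⟨i, fun h => absurd h hs⟩
  choose g hg using hbag
  have hle := Finset.card_le_mul_card_image_of_maps_to (f := g) (s := T)
    (t := (Finset.univ : Finset ι)) (fun _ _ => Finset.mem_univ _) 2 (by
      intro i _
      refine two_tri (tube n) (tube_clique n) (X i) (hw i) _ ?_
      intro s hs
      obtain ⟨h1, h2⟩ := Finset.mem_filter.mp hs
      refine ⟨(Finset.mem_filter.mp h1).2, ?_⟩
      rw [← h2]; exact hg s h1)
  rw [hTc, Finset.card_univ] at hle
  have hV : Nat.card (Fin n × Fin 3) = 3 * n := by simp [mul_comm]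
  rw [hV, Nat.card_eq_fintype_card]
  have h7 : (7 * n : ℝ) ≤ 2 * (Fintype.card ι : ℝ) + 6 := by
    have : 7 * n ≤ 2 * Fintype.card ι + 6 := by omega
    exact_mod_cast this
  push_cast
  linarith
end

section
/- Every K₃,₃-minor-free graph G has a planar partition of width 2 with at most (|V(G)| − 2)/3 bags of cardinality 2 (all other bags are singletons). That is, there is a partition of V(G) into parts of size at most 2 such that the quotient graph (identify each part to a vertex, delete loops, merge parallel edges) is planar, and at most (|V(G)| − 2)/3 parts have size 2. -/
open SimpleGraph

namespace Aux

theorem ncard_pair_le2 {V : Type*} (x y : V) : ({x, y} : Set V).ncard ≤ 2 :=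
  (Set.ncard_insert_le x {y}).trans (by rw [Set.ncard_singleton])

variable {V : Type*} {W : Type*} {α : Type*}

/-- Cut characterisation of connected vertex sets. -/
def Conn (G : SimpleGraph V) (S : Set V) : Prop :=
  S.Nonempty ∧ ∀ T ⊆ S, T.Nonempty → (∀ a ∈ T, ∀ b ∈ S, G.Adj a b → b ∈ T) → S ⊆ T

def AdjS (G : SimpleGraph V) (S T : Set V) : Prop := ∃ u ∈ S, ∃ v ∈ T, G.Adj u v

def MinorIn (H : SimpleGraph α) (G : SimpleGraph V) (A : Set V) : Prop :=
  ∃ f : α → Set V, (∀ a, Conn G (f a)) ∧ (∀ a, f a ⊆ A) ∧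
    (∀ a b v, v ∈ f a → v ∈ f b → a = b) ∧ ∀ a b, H.Adj a b → AdjS G (f a) (f b)

lemma conn_iff (G : SimpleGraph V) (S : Set V) : (G.induce S).Connected ↔ Conn G S := by
  constructor
  · intro h
    refine ⟨by have := h.nonempty; exact Set.nonempty_coe_sort.mp this, ?_⟩
    rintro T hTS ⟨t, ht⟩ hcl s hs
    have key : ∀ u v : S, (G.induce S).Walk u v → u.1 ∈ T → v.1 ∈ T := by
      intro u v w
      induction w with
      | nil => exact id
      | cons hadj _ ih => 
        intro hu
        exact ih (hcl _ hu _ (Subtype.property _) hadj)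
    obtain ⟨w⟩ := h.preconnected ⟨t, hTS ht⟩ ⟨s, hs⟩
    exact key _ _ w ht
  · rintro ⟨⟨s, hs⟩, h⟩
    have : Nonempty S := ⟨⟨s, hs⟩⟩
    refine SimpleGraph.Connected.mk ?_
    intro u v
    have := h {z | ∃ hz : z ∈ S, (G.induce S).Reachable u ⟨z, hz⟩} (fun z hz => hz.1)
      ⟨u, u.2, SimpleGraph.Reachable.refl _⟩ ?_ v.2
    · exact this.2
    · rintro a ⟨ha, hr⟩ b hb hab
      exact ⟨hb, hr.trans (SimpleGraph.Adj.reachable (by simpa using hab))⟩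

lemma minor_univ (H : SimpleGraph α) (G : SimpleGraph V) :
    IsMinor H G ↔ MinorIn H G Set.univ := by
  constructor
  · rintro ⟨f, _, h2, h3, h4⟩
    refine ⟨f, fun a => (conn_iff _ _).1 (h2 a), fun a => Set.subset_univ _, ?_, h4⟩
    intro a b v ha hb
    by_contra hne
    exact Set.disjoint_left.1 (h3 hne) ha hb
  · rintro ⟨f, h1, _, h3, h4⟩
    refine ⟨f, fun a => (h1 a).1, fun a => (conn_iff _ _).2 (h1 a), ?_, h4⟩
    intro a b hne
    exact Set.disjoint_left.2 fun v ha hb => hne (h3 a b v ha hb)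

lemma conn_singleton (G : SimpleGraph V) (v : V) : Conn G {v} := by
  refine ⟨⟨v, rfl⟩, ?_⟩
  rintro T hT ⟨t, ht⟩ _ s hs
  have := hT ht
  grind

lemma conn_union {G : SimpleGraph V} {S T : Set V} (hS : Conn G S) (hT : Conn G T)
    (h : AdjS G S T) : Conn G (S ∪ T) := by
  obtain ⟨u, hu, v, hv, huv⟩ := h
  refine ⟨⟨u, Or.inl hu⟩, ?_⟩
  intro R hR hne hcl
  have h1 : (R ∩ S).Nonempty → S ⊆ R := fun h x hx =>
    (hS.2 (R ∩ S) Set.inter_subset_right h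
      (fun a ha b hb hab => ⟨hcl a ha.1 b (Or.inl hb) hab, hb⟩) hx).1
  have h2 : (R ∩ T).Nonempty → T ⊆ R := fun h x hx =>
    (hT.2 (R ∩ T) Set.inter_subset_right h
      (fun a ha b hb hab => ⟨hcl a ha.1 b (Or.inr hb) hab, hb⟩) hx).1
  obtain ⟨r, hr⟩ := hne
  rcases hR hr with hrS | hrT
  · have h3 := h1 ⟨r, hr, hrS⟩
    have h4 := h2 ⟨v, hcl u (h3 hu) v (Or.inr hv) huv, hv⟩
    exact Set.union_subset h3 h4
  · have h3 := h2 ⟨r, hr, hrT⟩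
    have h4 := h1 ⟨u, hcl v (h3 hv) u (Or.inl hu) huv.symm, hu⟩
    exact Set.union_subset h4 h3

/-- component of `d` in `S` -/
def comp (G : SimpleGraph V) (S : Set V) (d : V) : Set V :=
  {z | ∃ C, Conn G C ∧ C ⊆ S ∧ d ∈ C ∧ z ∈ C}

lemma comp_sub (G : SimpleGraph V) (S : Set V) (d : V) : comp G S d ⊆ S := by
  rintro z ⟨C, _, h, _, hz⟩; exact h hz

lemma comp_self {G : SimpleGraph V} {S : Set V} {d : V} (hd : d ∈ S) : d ∈ comp G S d :=
  ⟨{d}, conn_singleton _ _, by simpa using hd, rfl, rfl⟩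

lemma comp_conn {G : SimpleGraph V} {S : Set V} {d : V} (hd : d ∈ S) : Conn G (comp G S d) := by
  refine ⟨⟨d, comp_self hd⟩, ?_⟩
  intro T hT hne hcl
  have h1 : ∀ C, Conn G C → C ⊆ S → d ∈ C → (T ∩ C).Nonempty → C ⊆ T := by
    intro C hC hCS hdC h x hx
    exact (hC.2 (T ∩ C) Set.inter_subset_right h
      (fun a ha b hb hab => ⟨hcl a ha.1 b ⟨C, hC, hCS, hdC, hb⟩ hab, hb⟩) hx).1
  obtain ⟨t, ht⟩ := hne
  obtain ⟨C, hC, hCS, hdC, htC⟩ := hT ht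
  have hdT := h1 C hC hCS hdC ⟨t, ht, htC⟩ hdC
  rintro z ⟨C', hC', hCS', hdC', hz⟩
  exact h1 C' hC' hCS' hdC' ⟨d, hdT, hdC'⟩ hz

lemma comp_closed {G : SimpleGraph V} {S : Set V} {d : V} {a b : V} (ha : a ∈ comp G S d)
    (hb : b ∈ S) (hab : G.Adj a b) : b ∈ comp G S d := by
  obtain ⟨C, hC, hCS, hdC, haC⟩ := ha
  refine ⟨C ∪ {b}, conn_union hC (conn_singleton _ _) ⟨a, haC, b, rfl, hab⟩, ?_, Or.inl hdC,
    Or.inr rfl⟩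
  exact Set.union_subset hCS (by simpa using hb)

/-- Removing a component of `B - w` keeps `B` connected. -/
lemma conn_diff {G : SimpleGraph V} {B D : Set V} {w : V} (hB : Conn G B) (hw : w ∈ B)
    (hwD : w ∉ D) (hDB : D ⊆ B)
    (hcl : ∀ a ∈ D, ∀ b ∈ B, b ≠ w → G.Adj a b → b ∈ D) : Conn G (B \ D) := by
  refine ⟨⟨w, hw, hwD⟩, ?_⟩
  intro T hT hne hTc
  by_cases hwT : w ∈ T
  · have := hB.2 (T ∪ D) (Set.union_subset (hT.trans Set.sdiff_subset) hDB)
      ⟨w, Or.inl hwT⟩ (by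
        rintro a (ha | ha) b hb hab
        · by_cases hbD : b ∈ D
          · exact Or.inr hbD
          · exact Or.inl (hTc a ha b ⟨hb, hbD⟩ hab)
        · by_cases hbw : b = w
          · exact Or.inl (hbw ▸ hwT)
          · exact Or.inr (hcl a ha b hb hbw hab))
    rintro x ⟨hx, hxD⟩
    exact (this hx).resolve_right hxD
  · have := hB.2 T (hT.trans Set.sdiff_subset) hne (by
        intro a ha b hb hab
        by_cases hbD : b ∈ D
        · exfalso
          exact (hT ha).2 (hcl b hbD a (hT ha).1 (fun h => hwT (h ▸ ha)) hab.symm)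
        · exact hTc a ha b ⟨hb, hbD⟩ hab)
    exact absurd (this hw) hwT

lemma minor_trans {H : SimpleGraph α} {G₁ : SimpleGraph V} {G₂ : SimpleGraph W}
    {A₁ : Set V} {A₂ : Set W} (h : MinorIn H G₁ A₁) (g : V → Set W)
    (g1 : ∀ a ∈ A₁, Conn G₂ (g a)) (g2 : ∀ a ∈ A₁, g a ⊆ A₂)
    (g3 : ∀ a ∈ A₁, ∀ b ∈ A₁, ∀ v, v ∈ g a → v ∈ g b → a = b)
    (g4 : ∀ a ∈ A₁, ∀ b ∈ A₁, G₁.Adj a b → AdjS G₂ (g a) (g b)) : MinorIn H G₂ A₂ := by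
  obtain ⟨f, f1, f2, f3, f4⟩ := h
  refine ⟨fun i => {v | ∃ a ∈ f i, v ∈ g a}, ?_, ?_, ?_, ?_⟩
  · intro i
    constructor
    · obtain ⟨a, ha⟩ := (f1 i).1
      obtain ⟨v, hv⟩ := (g1 a (f2 i ha)).1
      exact ⟨v, a, ha, hv⟩
    · rintro T hT ⟨t, ht⟩ hcl
      have key : ∀ a ∈ f i, (T ∩ g a).Nonempty → g a ⊆ T := by
        intro a ha hne x hx
        exact ((g1 a (f2 i ha)).2 (T ∩ g a) Set.inter_subset_right hne
          (fun u hu b hb hub => ⟨hcl u hu.1 b ⟨a, ha, hb⟩ hub, hb⟩) hx).1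
      obtain ⟨a, ha, hta⟩ := hT ht
      have := (f1 i).2 {a | a ∈ f i ∧ g a ⊆ T} (fun a h => h.1)
        ⟨a, ha, key a ha ⟨t, ht, hta⟩⟩ (by
          rintro a ⟨ha, haT⟩ b hb hab
          obtain ⟨u, hu, v, hv, huv⟩ := g4 a (f2 i ha) b (f2 i hb) hab
          exact ⟨hb, key b hb ⟨v, hcl u (haT hu) v ⟨b, hb, hv⟩ huv, hv⟩⟩)
      rintro v ⟨b, hb, hv⟩
      exact (this hb).2 hv
  · rintro i v ⟨a, ha, hv⟩
    exact g2 a (f2 i ha) hv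
  · rintro i j v ⟨a, ha, hv⟩ ⟨b, hb, hv'⟩
    have := g3 a (f2 i ha) b (f2 j hb) v hv hv'
    subst this
    exact f3 i j a ha hb
  · intro i j hij
    obtain ⟨a, ha, b, hb, hab⟩ := f4 i j hij
    obtain ⟨u, hu, v, hv, huv⟩ := g4 a (f2 i ha) b (f2 j hb) hab
    exact ⟨u, ⟨a, ha, hu⟩, v, ⟨b, hb, hv⟩, huv⟩

lemma minor_mono {H : SimpleGraph α} {G₁ G₂ : SimpleGraph V} {A₁ A₂ : Set V}
    (h : MinorIn H G₁ A₁) (hA : A₁ ⊆ A₂)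
    (hG : ∀ a ∈ A₁, ∀ b ∈ A₁, G₁.Adj a b → G₂.Adj a b) : MinorIn H G₂ A₂ := by
  refine minor_trans h (fun a => {a}) (fun a _ => conn_singleton _ _) ?_ ?_ ?_
  · intro a ha; simpa using hA ha
  · intro a _ b _ v hv hv'; simp at hv hv'; exact hv.symm.trans hv'
  · intro a ha b hb hab; exact ⟨a, rfl, b, rfl, hG a ha b hb hab⟩

/-- The properties of `K₅` and `K₃,₃` that are used. -/
structure Nice (H : SimpleGraph α) : Prop where
  conn : ∀ s t a b : α, a ≠ s → a ≠ t → b ≠ s → b ≠ t →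
    a = b ∨ H.Adj a b ∨ ∃ c, c ≠ s ∧ c ≠ t ∧ H.Adj a c ∧ H.Adj c b
  avoid : ∀ s t : α, ∃ a, a ≠ s ∧ a ≠ t
  deg : ∀ a, ∃ b, H.Adj a b
  five : ∃ e : Fin 5 → α, Function.Injective e

abbrev K5 : SimpleGraph (Fin 5) := ⊤
abbrev K33 : SimpleGraph (Fin 3 ⊕ Fin 3) := completeBipartiteGraph (Fin 3) (Fin 3)

lemma nice_K5 : Nice K5 where
  conn := by intro s t a b; by_cases h : a = b <;> simp [h]
  avoid := by decide
  deg := by decide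
  five := ⟨id, Function.injective_id⟩

lemma nice_K33 : Nice K33 where
  conn := by
    have hl : ∀ s t : Fin 3 ⊕ Fin 3, ∃ c : Fin 3, Sum.inl c ≠ s ∧ Sum.inl c ≠ t := by decide
    have hr : ∀ s t : Fin 3 ⊕ Fin 3, ∃ c : Fin 3, Sum.inr c ≠ s ∧ Sum.inr c ≠ t := by decide
    intro s t a b _ _ _ _
    obtain ⟨c, hc⟩ := hl s t
    obtain ⟨d, hd⟩ := hr s t
    rcases a with a | a <;> rcases b with b | b
    · exact Or.inr (Or.inr ⟨Sum.inr d, hd.1, hd.2, by simp, by simp⟩)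
    · simp
    · simp
    · exact Or.inr (Or.inr ⟨Sum.inl c, hc.1, hc.2, by simp, by simp⟩)
  avoid := by decide
  deg := by
    simp only [completeBipartiteGraph_adj]
    decide
  five := ⟨![Sum.inl 0, Sum.inl 1, Sum.inl 2, Sum.inr 0, Sum.inr 1], by decide⟩

lemma side {H : SimpleGraph α} {G : SimpleGraph V} {A A₁ A₂ : Set V} {x y : V}
    (hA : A ⊆ A₁ ∪ A₂) (hx1 : x ∈ A₁) (hy1 : y ∈ A₁)
    (hcap : ∀ z, z ∈ A₁ → z ∈ A₂ → z = x ∨ z = y)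
    (hsep : ∀ a ∈ A₁, a ∉ A₂ → ∀ b ∈ A₂, b ∉ A₁ → ¬ G.Adj a b)
    (hxy : x = y ∨ G.Adj x y)
    (f : α → Set V) (f1 : ∀ a, Conn G (f a)) (f2 : ∀ a, f a ⊆ A)
    (f3 : ∀ a b v, v ∈ f a → v ∈ f b → a = b)
    (f4 : ∀ a b, H.Adj a b → AdjS G (f a) (f b))
    (hside : ∀ a, x ∉ f a → y ∉ f a → ∀ z ∈ f a, z ∈ A₁ ∧ z ∉ A₂) : MinorIn H G A₁ := by
  have hnotA1 : ∀ i, ∀ z ∈ f i, z ∉ A₁ → x ∈ f i ∨ y ∈ f i := by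
    intro i z hz hz1
    by_contra hcon
    push Not at hcon
    exact hz1 (hside i hcon.1 hcon.2 z hz).1
  refine ⟨fun i => f i ∩ A₁, ?_, fun i => Set.inter_subset_right, ?_, ?_⟩
  · intro i
    have hx2 : ∀ z ∈ f i, z ∉ A₁ → z ∈ A₂ := fun z hz h => (hA (f2 i hz)).resolve_left h
    constructor
    · obtain ⟨v, hv⟩ := (f1 i).1
      by_cases h : v ∈ A₁
      · exact ⟨v, hv, h⟩
      · rcases hnotA1 i v hv h with h | h
        · exact ⟨x, h, hx1⟩
        · exact ⟨y, h, hy1⟩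
    · rintro T hT ⟨t, ht⟩ hcl
      -- fill in
      have hTxy : ∀ u v, (u = x ∨ u = y) → (v = x ∨ v = y) → u ∈ T → v ∈ f i → v ∈ T := by
        intro u v hu hv huT hvi
        have hv1 : v ∈ A₁ := by rcases hv with rfl | rfl <;> assumption
        by_cases huv : u = v
        · exact huv ▸ huT
        · have : G.Adj u v := by
            rcases hu with rfl | rfl <;> rcases hv with rfl | rfl
            · exact absurd rfl huv
            · exact hxy.resolve_left huv
            · exact (hxy.resolve_left (Ne.symm huv)).symm
            · exact absurd rfl huv
          exact hcl u huT v ⟨hvi, hv1⟩ this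
      have := (f1 i).2 (T ∪ {z | z ∈ f i ∧ z ∉ A₁ ∧ (x ∈ T ∨ y ∈ T)}) ?_ ⟨t, Or.inl ht⟩ ?_
      · rintro z ⟨hz, hz1⟩
        rcases this hz with h | h
        · exact h
        · exact absurd hz1 h.2.1
      · rintro z (h | h)
        · exact (hT h).1
        · exact h.1
      · rintro a (ha | ⟨hai, ha1, haT⟩) b hb hab
        · by_cases hb1 : b ∈ A₁
          · exact Or.inl (hcl a ha b ⟨hb, hb1⟩ hab)
          · refine Or.inr ⟨hb, hb1, ?_⟩
            have ha1 := (hT ha).2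
            have ha2 : a ∈ A₂ := by
              by_contra h
              exact hsep a ha1 h b (hx2 b hb hb1) hb1 hab
            rcases hcap a ha1 ha2 with rfl | rfl
            · exact Or.inl ha
            · exact Or.inr ha
        · by_cases hb1 : b ∈ A₁
          · left
            have hb2 : b ∈ A₂ := by
              by_contra h
              exact hsep b hb1 h a (hx2 a hai ha1) ha1 hab.symm
            rcases haT with h | h
            · exact hTxy x b (Or.inl rfl) (hcap b hb1 hb2) h hb
            · exact hTxy y b (Or.inr rfl) (hcap b hb1 hb2) h hb
          · exact Or.inr ⟨hb, hb1, haT⟩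
  · intro i j v hi hj
    exact f3 i j v hi.1 hj.1
  · intro i j hij
    obtain ⟨u, hu, v, hv, huv⟩ := f4 i j hij
    have hij' : i ≠ j := hij.ne
    by_cases huv1 : u ∈ A₁ ∧ v ∈ A₁
    · exact ⟨u, ⟨hu, huv1.1⟩, v, ⟨hv, huv1.2⟩, huv⟩
    · -- both meet {x,y}
      have main : ∀ i j u v, u ∈ f i → v ∈ f j → G.Adj u v → u ∉ A₁ → x ∈ f j ∨ y ∈ f j := by
        intro i j u v hu hv huv hu1
        by_cases hv1 : v ∈ A₁
        · have hv2 : v ∈ A₂ := by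
            by_contra h
            exact hsep v hv1 h u ((hA (f2 i hu)).resolve_left hu1) hu1 huv.symm
          rcases hcap v hv1 hv2 with rfl | rfl
          · exact Or.inl hv
          · exact Or.inr hv
        · exact hnotA1 j v hv hv1
      have hboth : (x ∈ f i ∨ y ∈ f i) ∧ (x ∈ f j ∨ y ∈ f j) := by
        by_cases hu1 : u ∈ A₁
        · have hv1 : v ∉ A₁ := fun h => huv1 ⟨hu1, h⟩
          exact ⟨main j i v u hv hu huv.symm hv1, hnotA1 j v hv hv1⟩
        · exact ⟨hnotA1 i u hu hu1, main i j u v hu hv huv hu1⟩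
      have hne : ∀ z, z ∈ f i → z ∈ f j → False := fun z h h' => hij' (f3 i j z h h')
      rcases hboth with ⟨h | h, h' | h'⟩
      · exact absurd h' (hne _ h)
      · rcases hxy with rfl | hxy
        · exact absurd h' (hne _ h)
        · exact ⟨x, ⟨h, hx1⟩, y, ⟨h', hy1⟩, hxy⟩
      · rcases hxy with rfl | hxy
        · exact absurd h' (hne _ h)
        · exact ⟨y, ⟨h, hy1⟩, x, ⟨h', hx1⟩, hxy.symm⟩
      · exact absurd h' (hne _ h)

lemma clique_sum {H : SimpleGraph α} (hH : Nice H) {G : SimpleGraph V} {A A₁ A₂ : Set V} {x y : V}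
    (hA : A ⊆ A₁ ∪ A₂) (hx1 : x ∈ A₁) (hy1 : y ∈ A₁) (hx2 : x ∈ A₂) (hy2 : y ∈ A₂)
    (hcap : ∀ z, z ∈ A₁ → z ∈ A₂ → z = x ∨ z = y)
    (hsep : ∀ a ∈ A₁, a ∉ A₂ → ∀ b ∈ A₂, b ∉ A₁ → ¬ G.Adj a b)
    (hxy : x = y ∨ G.Adj x y) (h : MinorIn H G A) : MinorIn H G A₁ ∨ MinorIn H G A₂ := by
  obtain ⟨f, f1, f2, f3, f4⟩ := h
  obtain ⟨e, _⟩ := hH.five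
  have hs : ∀ z : V, ∃ s, ∀ a, z ∈ f a → a = s := by
    intro z
    by_cases h : ∃ s, z ∈ f s
    · obtain ⟨s, hs⟩ := h
      exact ⟨s, fun a ha => f3 a s z ha hs⟩
    · exact ⟨e 0, fun a ha => absurd ⟨a, ha⟩ h⟩
  obtain ⟨s, hs'⟩ := hs x
  obtain ⟨t, ht'⟩ := hs y
  -- each set avoiding x, y lies on one side
  have hone : ∀ a, x ∉ f a → y ∉ f a → ∀ z ∈ f a, z ∈ A₁ → ∀ z ∈ f a, z ∈ A₁ ∧ z ∉ A₂ := by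
    intro a hxa hya z hz hz1
    have hno : ∀ w ∈ f a, w ∈ A₁ → w ∉ A₂ := by
      intro w hw h1 h2
      rcases hcap w h1 h2 with rfl | rfl
      · exact hxa hw
      · exact hya hw
    have := (f1 a).2 (f a ∩ A₁) Set.inter_subset_left ⟨z, hz, hz1⟩ (by
      rintro u ⟨hu, hu1⟩ b hb hub
      refine ⟨hb, ?_⟩
      by_contra hb1
      exact hsep u hu1 (hno u hu hu1) b ((hA (f2 a hb)).resolve_left hb1) hb1 hub)
    intro w hw
    exact ⟨(this hw).2, hno w hw (this hw).2⟩
  -- adjacent ones on the same side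
  have hadj : ∀ a b, x ∉ f a → y ∉ f a → x ∉ f b → y ∉ f b → H.Adj a b →
      (∀ z ∈ f a, z ∈ A₁ ∧ z ∉ A₂) → (∀ z ∈ f b, z ∈ A₁ ∧ z ∉ A₂) := by
    intro a b _ _ hxb hyb hab ha
    obtain ⟨u, hu, v, hv, huv⟩ := f4 a b hab
    refine hone b hxb hyb v hv ?_
    by_contra hv1
    exact hsep u (ha u hu).1 (ha u hu).2 v ((hA (f2 b hv)).resolve_left hv1) hv1 huv
  by_cases hcase : ∃ a, x ∉ f a ∧ y ∉ f a ∧ a ≠ s ∧ a ≠ t ∧ ∃ z ∈ f a, z ∈ A₁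
  · left
    obtain ⟨a, hxa, hya, has, hat, z, hz, hz1⟩ := hcase
    have ha := hone a hxa hya z hz hz1
    have hgood : ∀ b, b ≠ s → b ≠ t → ∀ z ∈ f b, z ∈ A₁ ∧ z ∉ A₂ := by
      intro b hbs hbt
      have nx : ∀ c, c ≠ s → x ∉ f c := fun c h h' => h (hs' c h')
      have ny : ∀ c, c ≠ t → y ∉ f c := fun c h h' => h (ht' c h')
      rcases hH.conn s t a b has hat hbs hbt with rfl | h | ⟨c, hcs, hct, h1, h2⟩
      · exact ha
      · exact hadj a b hxa hya (nx b hbs) (ny b hbt) h ha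
      · exact hadj c b (nx c hcs) (ny c hct) (nx b hbs) (ny b hbt) h2
          (hadj a c hxa hya (nx c hcs) (ny c hct) h1 ha)
    refine side hA hx1 hy1 hcap hsep hxy f f1 f2 f3 f4 ?_
    intro b hxb hyb
    by_cases hb : b ≠ s ∧ b ≠ t
    · exact hgood b hb.1 hb.2
    · -- b is s or t but avoids x and y
      obtain ⟨c, hc⟩ : ∃ c, (c ≠ s ∧ c ≠ t) ∧ (H.Adj c b) := by
        obtain ⟨d, hd⟩ := hH.avoid s t
        by_cases hbs : b = s
        · subst hbs
          by_cases hbt : b = t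
          · subst hbt
            obtain ⟨c, hc⟩ := hH.deg b
            exact ⟨c, ⟨hc.ne', hc.ne'⟩, hc.symm⟩
          · rcases hH.conn t t d b hd.2 hd.2 hbt hbt with h | h | ⟨c, hc1, _, hc2, hc3⟩
            · exact absurd h hd.1
            · exact ⟨d, hd, h⟩
            · exact ⟨c, ⟨hc3.ne, hc1⟩, hc3⟩
        · have hbt : b = t := by by_contra h; exact hb ⟨hbs, h⟩
          subst hbt
          rcases hH.conn s s d b hd.1 hd.1 hbs hbs with h | h | ⟨c, hc1, _, hc2, hc3⟩
          · exact absurd h hd.2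
          · exact ⟨d, hd, h⟩
          · exact ⟨c, ⟨hc1, hc3.ne⟩, hc3⟩
      exact hadj c b (fun h => hc.1.1 (hs' c h)) (fun h => hc.1.2 (ht' c h)) hxb hyb hc.2
        (hgood c hc.1.1 hc.1.2)
  · right
    push Not at hcase
    refine side (x := x) (y := y) (A₁ := A₂) (A₂ := A₁) (by rwa [Set.union_comm]) hx2 hy2
      (fun z h h' => hcap z h' h)
      (fun a ha ha' b hb hb' hab => hsep b hb hb' a ha ha' hab.symm) hxy f f1 f2 f3 f4 ?_
    intro b hxb hyb
    by_contra hcon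
    push Not at hcon
    obtain ⟨z, hz, hzz⟩ := hcon
    have hz1 : z ∈ A₁ := by
      rcases hA (f2 b hz) with h | h
      · exact h
      · exact hzz h
    have hb := hone b hxb hyb z hz hz1
    have nx : ∀ c, c ≠ s → x ∉ f c := fun c h h' => h (hs' c h')
    have ny : ∀ c, c ≠ t → y ∉ f c := fun c h h' => h (ht' c h')
    have hcontr : ∀ c, c ≠ s → c ≠ t → H.Adj b c → False := by
      intro c h1 h2 h3
      have := hadj b c hxb hyb (nx c h1) (ny c h2) h3 hb
      obtain ⟨w, hw⟩ := (f1 c).1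
      exact hcase c (nx c h1) (ny c h2) h1 h2 w hw (this w hw).1
    have hbst : ¬ (b ≠ s ∧ b ≠ t) := fun h => hcase b hxb hyb h.1 h.2 z hz hz1
    obtain ⟨d, hd⟩ := hH.avoid s t
    by_cases hbs : b = s
    · subst hbs
      by_cases hbt : b = t
      · subst hbt
        obtain ⟨c, hc⟩ := hH.deg b
        exact hcontr c hc.ne' hc.ne' hc
      · rcases hH.conn t t d b hd.2 hd.2 hbt hbt with h | h | ⟨c, hc1, _, hc2, hc3⟩
        · exact absurd h hd.1
        · exact hcontr d hd.1 hd.2 h.symm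
        · exact hcontr c hc3.ne hc1 hc3.symm
    · have hbt : b = t := by by_contra h; exact hbst ⟨hbs, h⟩
      subst hbt
      rcases hH.conn s s d b hd.1 hd.1 hbs hbs with h | h | ⟨c, hc1, _, hc2, hc3⟩
      · exact absurd h hd.2
      · exact hcontr d hd.1 hd.2 h.symm
      · exact hcontr c hc1 hc3.ne hc3.symm

/-- The set `X` meets at least two of the four attachment classes. -/
def At2 (p : V → Fin 4 → Prop) (X : Set V) : Prop :=
  ∃ j k, j ≠ k ∧ (∃ v ∈ X, p v j) ∧ (∃ v ∈ X, p v k)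

lemma At2.mono {p : V → Fin 4 → Prop} {X Y : Set V} (h : At2 p X) (hXY : X ⊆ Y) : At2 p Y := by
  obtain ⟨j, k, hjk, ⟨v, hv, hp⟩, ⟨u, hu, hq⟩⟩ := h
  exact ⟨j, k, hjk, ⟨v, hXY hv, hp⟩, ⟨u, hXY hu, hq⟩⟩

lemma at2_third {p : V → Fin 4 → Prop} {X Y Z : Set V}
    (hall : ∀ j, ∃ v, (v ∈ X ∨ v ∈ Y ∨ v ∈ Z) ∧ p v j) (hX : ¬ At2 p X) (hY : ¬ At2 p Y) :
    At2 p Z := by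
  by_contra hZ
  let S : Fin 3 → Set V := ![X, Y, Z]
  have h : ∀ j, ∃ i : Fin 3, ∃ v ∈ S i, p v j := by
    intro j
    obtain ⟨v, h | h | h, hp⟩ := hall j
    · exact ⟨0, v, h, hp⟩
    · exact ⟨1, v, h, hp⟩
    · exact ⟨2, v, h, hp⟩
  choose c hc using h
  obtain ⟨j, k, hjk, hcc⟩ := Fintype.exists_ne_map_eq_of_card_lt c (by simp)
  have hno : ∀ i, ¬ At2 p (S i) := by
    intro i
    fin_cases i
    · exact hX
    · exact hY
    · exact hZ
  exact hno (c j) ⟨j, k, hjk, hc j, hcc ▸ hc k⟩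

lemma center [Finite V] {G : SimpleGraph V} {B : Set V} (hB : Conn G B) (p : V → Fin 4 → Prop)
    (hall : ∀ j, ∃ v ∈ B, p v j)
    (hns : ∀ X ⊆ B, Conn G X → Conn G (B \ X) → At2 p X → At2 p (B \ X) → False) :
    ∃ w ∈ B, ∀ C ⊆ B, w ∉ C → Conn G C → ¬ At2 p C := by
  let F : Set (Set V) := {X | X ⊆ B ∧ (X = ∅ ∨ Conn G X) ∧ Conn G (B \ X) ∧ ¬ At2 p X}
  have hF : F.Nonempty := by
    refine ⟨∅, Set.empty_subset _, Or.inl rfl, by simpa using hB, ?_⟩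
    rintro ⟨j, k, _, ⟨v, hv, _⟩, _⟩
    exact hv
  obtain ⟨X, hXF, hmax⟩ := (Set.toFinite F).exists_maximal hF
  obtain ⟨hXB, hXc, hBX, hX2⟩ := hXF
  -- choose w
  obtain ⟨w, hw, hwX⟩ : ∃ w ∈ B \ X, X = ∅ ∨ AdjS G X {w} := by
    rcases hXc with h | h
    · obtain ⟨w, hw⟩ := hBX.1
      exact ⟨w, hw, Or.inl h⟩
    · by_contra hcon
      push Not at hcon
      have := hB.2 X hXB h.1 (by
        intro a ha b hb hab
        by_contra hbX
        exact (hcon b ⟨hb, hbX⟩).2 ⟨a, ha, b, rfl, hab⟩)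
      obtain ⟨w, hw⟩ := hBX.1
      exact hw.2 (this hw.1)
  set S : Set V := (B \ X) \ {w} with hS
  -- facts about components
  have hcomp : ∀ d ∈ S, Conn G ((B \ X) \ comp G S d) := by
    intro d hd
    refine conn_diff hBX hw ?_ ((comp_sub G S d).trans Set.sdiff_subset) ?_
    · intro h; exact (comp_sub G S d h).2 rfl
    · intro a ha b hb hbw hab
      exact comp_closed ha ⟨hb, hbw⟩ hab
  have hsmall : ∀ d ∈ S, ¬ At2 p (comp G S d) := by
    intro d hd h2
    have hDS := comp_sub G S d
    have hwD : w ∉ comp G S d := fun h => (hDS h).2 rfl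
    have hDB : comp G S d ⊆ B := fun z hz => (hDS hz).1.1
    have hXD : ∀ z ∈ X, z ∉ comp G S d := fun z hz h => (hDS h).1.2 hz
    have hconn : Conn G (B \ comp G S d) := by
      have heq : B \ comp G S d = X ∪ ((B \ X) \ comp G S d) := by
        ext z
        constructor
        · rintro ⟨h1, h2⟩
          by_cases hz : z ∈ X
          · exact Or.inl hz
          · exact Or.inr ⟨⟨h1, hz⟩, h2⟩
        · rintro (h | h)
          · exact ⟨hXB h, hXD z h⟩
          · exact ⟨h.1.1, h.2⟩
      rw [heq]
      rcases hXc with h | h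
      · rw [h, Set.empty_union, ← h]; exact hcomp d hd
      · refine conn_union h (hcomp d hd) ?_
        rcases hwX with h' | ⟨u, hu, v, hv, huv⟩
        · exact absurd h.1 (by simp [h'])
        · rw [Set.mem_singleton_iff] at hv
          subst hv
          exact ⟨u, hu, v, ⟨hw, hwD⟩, huv⟩
    have hn2 : ¬ At2 p (B \ comp G S d) := fun h =>
      hns _ hDB (comp_conn hd) hconn h2 h
    have hmem : B \ comp G S d ∈ F := by
      refine ⟨Set.sdiff_subset, Or.inr hconn, ?_, hn2⟩
      rw [Set.sdiff_sdiff_cancel_left hDB]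
      exact comp_conn hd
    have := hmax hmem (fun z hz => ⟨hXB hz, hXD z hz⟩) ⟨hw.1, hwD⟩
    exact hw.2 this
  have hnadj : ∀ d ∈ S, ∀ a ∈ X, ¬ G.Adj a d := by
    intro d hd a ha had
    have hDS := comp_sub G S d
    have hXconn : Conn G X := by
      rcases hXc with h | h
      · rw [h] at ha; exact absurd ha (Set.notMem_empty _)
      · exact h
    have hun := conn_union hXconn (comp_conn hd) ⟨a, ha, d, comp_self hd, had⟩
    have hsub : X ∪ comp G S d ⊆ B := Set.union_subset hXB fun z hz => (hDS hz).1.1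
    have hc : Conn G (B \ (X ∪ comp G S d)) := by
      rw [← Set.sdiff_sdiff]; exact hcomp d hd
    by_cases h2 : At2 p (X ∪ comp G S d)
    · refine hns _ hsub hun hc h2 (at2_third (X := X) (Y := comp G S d) ?_ hX2 (hsmall d hd))
      intro j
      obtain ⟨v, hv, hp⟩ := hall j
      refine ⟨v, ?_, hp⟩
      by_cases h1 : v ∈ X
      · exact Or.inl h1
      · by_cases h3 : v ∈ comp G S d
        · exact Or.inr (Or.inl h3)
        · exact Or.inr (Or.inr ⟨hv, fun h => h.elim h1 h3⟩)
    · have := hmax (show X ∪ comp G S d ∈ F from ⟨hsub, Or.inr hun, hc, h2⟩)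
        Set.subset_union_left (Or.inr (comp_self hd))
      exact hd.1.2 this
  refine ⟨w, hw.1, ?_⟩
  intro C hCB hwC hC h2
  by_cases hCX : (C ∩ X).Nonempty
  · have := hC.2 (C ∩ X) Set.inter_subset_left hCX (by
      rintro a ⟨haC, haX⟩ b hb hab
      refine ⟨hb, ?_⟩
      by_contra hbX
      exact hnadj b ⟨⟨hCB hb, hbX⟩, fun h => hwC (h ▸ hb)⟩ a haX hab)
    exact hX2 (h2.mono fun z hz => (this hz).2)
  · obtain ⟨d, hd⟩ := hC.1
    have hCS : C ⊆ S := fun z hz =>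
      ⟨⟨hCB hz, fun h => hCX ⟨z, hz, h⟩⟩, fun h => hwC (h ▸ hz)⟩
    exact hsmall d (hCS hd) (h2.mono fun z hz => ⟨C, hC, hCS, hd, hz⟩)

lemma fin4 (P Q : Fin 4 → Prop) (h : ∀ j, P j ∨ Q j) (hP : ∃ j k, j ≠ k ∧ P j ∧ P k)
    (hQ : ∃ j k, j ≠ k ∧ Q j ∧ Q k) :
    ∃ a b c d : Fin 4, a ≠ b ∧ a ≠ c ∧ a ≠ d ∧ b ≠ c ∧ b ≠ d ∧ c ≠ d ∧ P a ∧ P b ∧ Q c ∧ Q d := by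
  classical
  have key : ∀ j k l m : Fin 4, j ≠ k → l ≠ m → 
      (∃ a b : Fin 4, a ≠ b ∧ a ≠ j ∧ a ≠ k ∧ b ≠ j ∧ b ≠ k) := by decide
  obtain ⟨j, k, hjk, hj, hk⟩ := hP
  obtain ⟨l, m, hlm, hl, hm⟩ := hQ
  obtain ⟨a, b, hab, h1, h2, h3, h4⟩ := key j k l m hjk hlm
  have huniv : ∀ z : Fin 4, z = j ∨ z = k ∨ z = a ∨ z = b := by
    clear * - hab h1 h2 h3 h4 hjk
    revert j k a b
    decide
  have ha := h a
  have hb := h b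
  have hl' := huniv l
  have hm' := huniv m
  clear key huniv
  by_contra hcon
  have hcon' : ∀ a b c d : Fin 4, P a → P b → Q c → Q d → 
    a = b ∨ a = c ∨ a = d ∨ b = c ∨ b = d ∨ c = d := by
    intro a b c d h1 h2 h3 h4
    by_contra hne
    push Not at hne
    exact hcon ⟨a, b, c, d, hne.1, hne.2.1, hne.2.2.1, hne.2.2.2.1, hne.2.2.2.2.1, hne.2.2.2.2.2,
      h1, h2, h3, h4⟩
  clear hcon
  have hj' := h j
  have hk' := h k
  clear h
  by_cases hPa : P a <;> by_cases hPb : P b <;> by_cases hQa : Q a <;> by_cases hQb : Q b <;>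
    grind

lemma k33_of {G : SimpleGraph V} {A : Set V} (L R : Fin 3 → Set V)
    (hL : ∀ i, Conn G (L i)) (hR : ∀ i, Conn G (R i)) (hLA : ∀ i, L i ⊆ A) (hRA : ∀ i, R i ⊆ A)
    (hLL : ∀ i j v, v ∈ L i → v ∈ L j → i = j) (hRR : ∀ i j v, v ∈ R i → v ∈ R j → i = j)
    (hLR : ∀ i j v, v ∈ L i → v ∈ R j → False) (hadj : ∀ i j, AdjS G (L i) (R j)) :
    MinorIn K33 G A := by
  refine ⟨Sum.elim L R, ?_, ?_, ?_, ?_⟩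
  · rintro (i | i)
    exacts [hL i, hR i]
  · rintro (i | i)
    exacts [hLA i, hRA i]
  · rintro (i | i) (j | j) v h h'
    · exact congrArg _ (hLL i j v h h')
    · exact (hLR i j v h h').elim
    · exact (hLR j i v h' h).elim
    · exact congrArg _ (hRR i j v h h')
  · rintro (i | i) (j | j) h
    · simp at h
    · exact hadj i j
    · obtain ⟨u, hu, v, hv, huv⟩ := hadj j i
      exact ⟨v, hv, u, hu, huv.symm⟩
    · simp at h

/-- Every branch set of a `K₅` model in a `K₃,₃`-minor-free graph has a centre. -/
lemma model_center [Finite V] {G : SimpleGraph V} {A : Set V} (hG : ¬ MinorIn K33 G A)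
    (f : Fin 5 → Set V) (f1 : ∀ a, Conn G (f a)) (f2 : ∀ a, f a ⊆ A)
    (f3 : ∀ a b v, v ∈ f a → v ∈ f b → a = b) (f4 : ∀ a b, a ≠ b → AdjS G (f a) (f b))
    (i : Fin 5) : ∃ w ∈ f i, ∀ C ⊆ f i, w ∉ C → Conn G C →
      ∀ j k, j ≠ i → k ≠ i → AdjS G C (f j) → AdjS G C (f k) → j = k := by
  obtain ⟨w, hw, h⟩ := center (f1 i) (fun v j => ∃ u ∈ f (i.succAbove j), G.Adj v u)
    (fun j => by
      obtain ⟨u, hu, v, hv, huv⟩ := f4 i (i.succAbove j) (Fin.succAbove_ne i j).symm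
      exact ⟨u, hu, v, hv, huv⟩) (by
    intro X hX hXc hYc hX2 hY2
    set Y := f i \ X with hY
    have hYB : Y ⊆ f i := Set.sdiff_subset
    obtain ⟨a, b, c, d, hab, hac, had, hbc, hbd, hcd, ha, hb, hc, hd⟩ :=
      fin4 (fun j => AdjS G X (f (i.succAbove j))) (fun j => AdjS G Y (f (i.succAbove j)))
        (by
          intro j
          obtain ⟨u, hu, v, hv, huv⟩ := f4 i (i.succAbove j) (Fin.succAbove_ne i j).symm
          by_cases h : u ∈ X
          · exact Or.inl ⟨u, h, v, hv, huv⟩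
          · exact Or.inr ⟨u, ⟨hu, h⟩, v, hv, huv⟩)
        (by
          obtain ⟨j, k, hjk, h1, h2⟩ := hX2
          exact ⟨j, k, hjk, h1, h2⟩)
        (by
          obtain ⟨j, k, hjk, h1, h2⟩ := hY2
          exact ⟨j, k, hjk, h1, h2⟩)
    have hXY : AdjS G X Y := by
      by_contra hcon
      have := (f1 i).2 X hX hXc.1 (by
        intro a ha b hb hab
        by_contra hbX
        exact hcon ⟨a, ha, b, ⟨hb, hbX⟩, hab⟩)
      obtain ⟨y, hy⟩ := hYc.1
      exact hy.2 (this hy.1)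
    have hinj := Fin.succAbove_right_injective (p := i)
    have hdis : ∀ j k v, j ≠ k → v ∈ f (i.succAbove j) → v ∈ f (i.succAbove k) → False :=
      fun j k v hjk h1 h2 => hjk (hinj (f3 _ _ v h1 h2))
    have hdi : ∀ j v, v ∈ f (i.succAbove j) → v ∈ f i → False :=
      fun j v h1 h2 => Fin.succAbove_ne i j (f3 _ _ v h1 h2)
    have hsw : ∀ S T, AdjS G S T → AdjS G T S := by
      rintro S T ⟨u, hu, v, hv, huv⟩
      exact ⟨v, hv, u, hu, huv.symm⟩
    have hadj' : ∀ j k, j ≠ k → AdjS G (f (i.succAbove j)) (f (i.succAbove k)) :=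
      fun j k hjk => f4 _ _ (fun h => hjk (hinj h))
    apply hG
    refine k33_of ![X, f (i.succAbove c), f (i.succAbove d)]
      ![Y, f (i.succAbove a), f (i.succAbove b)] ?_ ?_ ?_ ?_ ?_ ?_ ?_ ?_
    · intro z; fin_cases z
      exacts [hXc, f1 _, f1 _]
    · intro z; fin_cases z
      exacts [hYc, f1 _, f1 _]
    · intro z; fin_cases z
      exacts [hX.trans (f2 i), f2 _, f2 _]
    · intro z; fin_cases z
      exacts [hYB.trans (f2 i), f2 _, f2 _]
    · intro z z' v h h'
      fin_cases z <;> fin_cases z' <;> first | rfl | exfalso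
      · exact hdi c v h' (hX h)
      · exact hdi d v h' (hX h)
      · exact hdi c v h (hX h')
      · exact hdis c d v hcd h h'
      · exact hdi d v h (hX h')
      · exact hdis c d v hcd h' h
    · intro z z' v h h'
      fin_cases z <;> fin_cases z' <;> first | rfl | exfalso
      · exact hdi a v h' (hYB h)
      · exact hdi b v h' (hYB h)
      · exact hdi a v h (hYB h')
      · exact hdis a b v hab h h'
      · exact hdi b v h (hYB h')
      · exact hdis a b v hab h' h
    · intro z z' v h h'
      fin_cases z <;> fin_cases z'
      · exact h'.2 h
      · exact hdi a v h' (hX h)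
      · exact hdi b v h' (hX h)
      · exact hdi c v h (hYB h')
      · exact hdis a c v hac h' h
      · exact hdis b c v hbc h' h
      · exact hdi d v h (hYB h')
      · exact hdis a d v had h' h
      · exact hdis b d v hbd h' h
    · intro z z'
      fin_cases z <;> fin_cases z'
      · exact hXY
      · exact ha
      · exact hb
      · exact hsw _ _ hc
      · exact hadj' c a hac.symm
      · exact hadj' c b hbc.symm
      · exact hsw _ _ hd
      · exact hadj' d a had.symm
      · exact hadj' d b hbd.symm)
  refine ⟨w, hw, ?_⟩
  intro C hC hwC hCc j k hj hk hCj hCk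
  by_contra hjk
  obtain ⟨j', rfl⟩ := Fin.exists_succAbove_eq hj
  obtain ⟨k', rfl⟩ := Fin.exists_succAbove_eq hk
  exact h C hC hwC hCc ⟨j', k', fun h => hjk (by rw [h]), hCj, hCk⟩

structure Sep (G : SimpleGraph V) (A A₁ A₂ : Set V) (x y : V) : Prop where
  union : A₁ ∪ A₂ = A
  x1 : x ∈ A₁
  x2 : x ∈ A₂
  y1 : y ∈ A₁
  y2 : y ∈ A₂
  int : ∀ z, z ∈ A₁ → z ∈ A₂ → z = x ∨ z = y
  sep : ∀ a ∈ A₁, a ∉ A₂ → ∀ b ∈ A₂, b ∉ A₁ → ¬ G.Adj a b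
  ne1 : ∃ a ∈ A₁, a ∉ A₂
  ne2 : ∃ a ∈ A₂, a ∉ A₁

lemma Sep.symm {G : SimpleGraph V} {A A₁ A₂ : Set V} {x y : V} (h : Sep G A A₁ A₂ x y) :
    Sep G A A₂ A₁ x y where
  union := by rw [Set.union_comm]; exact h.union
  x1 := h.x2
  x2 := h.x1
  y1 := h.y2
  y2 := h.y1
  int := fun z h1 h2 => h.int z h2 h1
  sep := fun a ha ha' b hb hb' hab => h.sep b hb hb' a ha ha' hab.symm
  ne1 := h.ne2
  ne2 := h.ne1

lemma Sep.swap {G : SimpleGraph V} {A A₁ A₂ : Set V} {x y : V} (h : Sep G A A₁ A₂ x y) :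
    Sep G A A₁ A₂ y x where
  union := h.union
  x1 := h.y1
  x2 := h.y2
  y1 := h.x1
  y2 := h.x2
  int := fun z h1 h2 => (h.int z h1 h2).symm
  sep := h.sep
  ne1 := h.ne1
  ne2 := h.ne2

/-- separation from a set `Z` whose neighbourhood is within `{x, y}`. -/
lemma sep_of {G : SimpleGraph V} {A Z : Set V} {x y z b : V} (hZ : Z ⊆ A) (hx : x ∈ A) (hy : y ∈ A)
    (hxZ : x ∉ Z) (hyZ : y ∉ Z) (hz : z ∈ Z) (hb : b ∈ A) (hbZ : b ∉ Z) (hbx : b ≠ x) (hby : b ≠ y)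
    (hN : ∀ a ∈ Z, ∀ c ∈ A, G.Adj a c → c ∈ Z ∨ c = x ∨ c = y) :
    Sep G A (Z ∪ {x, y}) (A \ Z) x y where
  union := by
    ext c
    simp only [Set.mem_union, Set.mem_insert_iff, Set.mem_singleton_iff, Set.mem_sdiff]
    constructor
    · rintro ((h | h | h) | h)
      exacts [hZ h, h ▸ hx, h ▸ hy, h.1]
    · intro h
      by_cases h' : c ∈ Z
      · exact Or.inl (Or.inl h')
      · exact Or.inr ⟨h, h'⟩
  x1 := by simp
  x2 := ⟨hx, hxZ⟩
  y1 := by simp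
  y2 := ⟨hy, hyZ⟩
  int := by
    rintro c (h | h | h) h2
    exacts [absurd h h2.2, Or.inl h, Or.inr h]
  sep := by
    rintro a h1 h2 c h3 h4 hac
    have haZ : a ∈ Z := by
      rcases h1 with h | h | h
      · exact h
      · exact absurd ⟨h ▸ hx, h ▸ hxZ⟩ h2
      · exact absurd ⟨(show a = y from h) ▸ hy, (show a = y from h) ▸ hyZ⟩ h2
    exact h4 (hN a haZ c h3.1 hac)
  ne1 := ⟨z, Or.inl hz, fun h => h.2 hz⟩
  ne2 := ⟨b, ⟨hb, hbZ⟩, by rintro (h | h | h); exacts [hbZ h, hbx h, hby h]⟩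

lemma exists_sep [Finite V] {G : SimpleGraph V} {A : Set V} (hG : ¬ MinorIn K33 G A)
    (hM : MinorIn K5 G A) : A.ncard = 5 ∨ ∃ A₁ A₂ x y, Sep G A A₁ A₂ x y := by
  let F : Set (Fin 5 → Set V) := {f | (∀ a, Conn G (f a)) ∧ (∀ a, f a ⊆ A) ∧
    (∀ a b v, v ∈ f a → v ∈ f b → a = b) ∧ ∀ a b, a ≠ b → AdjS G (f a) (f b)}
  obtain ⟨f0, h01, h02, h03, h04⟩ := hM
  obtain ⟨f, ⟨f1, f2, f3, f4⟩, hmax⟩ := (Set.toFinite F).exists_maximal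
    ⟨f0, h01, h02, h03, fun a b hab => h04 a b (by simpa using hab)⟩
  have hc := model_center hG f f1 f2 f3 f4
  choose w hw hC using hc
  have hwne : ∀ i j, w i = w j → i = j := fun i j h => f3 i j (w i) (hw i) (h ▸ hw j)
  by_cases hcov : ∃ d ∈ A, ∀ i, d ∉ f i
  · -- no edges leave the model
    right
    obtain ⟨d, hd, hdf⟩ := hcov
    refine ⟨_, _, w 0, w 0, sep_of (Z := {z ∈ A | ∀ i, z ∉ f i}) (z := d) (b := w 1)
      (fun z h => h.1) (f2 0 (hw 0)) (f2 0 (hw 0)) (fun h => h.2 0 (hw 0))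
      (fun h => h.2 0 (hw 0)) ⟨hd, hdf⟩ (f2 1 (hw 1)) (fun h => h.2 1 (hw 1))
      (fun h => by simpa using hwne _ _ h) (fun h => by simpa using hwne _ _ h) ?_⟩
    rintro a ⟨haA, haf⟩ c hcA hac
    left
    refine ⟨hcA, ?_⟩
    intro i hci
    classical
    have hmem : (fun j => if j = i then f i ∪ {a} else f j) ∈ F := by
      refine ⟨?_, ?_, ?_, ?_⟩
      · intro j
        by_cases h : j = i
        · simp only [h, if_true]
          exact conn_union (f1 i) (conn_singleton _ _) ⟨c, hci, a, rfl, hac.symm⟩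
        · simp only [h, if_false]; exact f1 j
      · intro j
        by_cases h : j = i
        · simp only [h, if_true]
          exact Set.union_subset (f2 i) (by simpa using haA)
        · simp only [h, if_false]; exact f2 j
      · intro j k v
        by_cases h : j = i <;> by_cases h' : k = i <;>
          simp only [h, h', if_true, if_false] <;> intro hj hk
        · trivial
        · rcases hj with hj | hj
          · exact f3 _ _ v hj hk
          · exact absurd ((show v = a from hj) ▸ hk) (haf k)
        · rcases hk with hk | hk
          · exact h (f3 _ _ v hj hk)
          · exact absurd ((show v = a from hk) ▸ hj) (haf j)
        · exact f3 _ _ v hj hk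
      · intro j k hjk
        obtain ⟨u, hu, v, hv, huv⟩ := f4 j k hjk
        refine ⟨u, ?_, v, ?_, huv⟩
        · by_cases h : j = i
          · subst h; simp [hu]
          · simpa [h] using hu
        · by_cases h : k = i
          · subst h; simp [hv]
          · simpa [h] using hv
    have := hmax hmem (by
      intro j z hz
      by_cases h : j = i
      · subst h; simp; exact Or.inr hz
      · simpa [h] using hz) i
    exact haf i (this (by simp))
  push Not at hcov
  by_cases hS : ∀ d ∈ A, ∃ i, d = w i
  · left
    have : A = Set.range w := by
      ext d
      constructor
      · intro h; obtain ⟨i, hi⟩ := hS d h; exact ⟨i, hi.symm⟩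
      · rintro ⟨i, rfl⟩; exact f2 i (hw i)
    rw [this, ← Nat.card_coe_set_eq, Nat.card_range_of_injective (fun i j h => hwne i j h)]
    simp
  right
  push Not at hS
  obtain ⟨d, hd, hdw⟩ := hS
  obtain ⟨i, hi⟩ := hcov d hd
  have third : ∀ i j : Fin 5, ∃ k, k ≠ i ∧ k ≠ j := by decide
  let Z : Fin 5 → Fin 5 → Set V := fun i j =>
    {z | ∃ C ⊆ f i, w i ∉ C ∧ Conn G C ∧ z ∈ C ∧ AdjS G C (f j)}
  have hZf : ∀ i j, Z i j ⊆ f i := fun i j z ⟨C, h, _, _, hz, _⟩ => h hz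
  have hwZ : ∀ i j k, w k ∉ Z i j := by
    rintro i j k ⟨C, h, h', _, hz, _⟩
    have := f3 k i (w k) (hw k) (h hz)
    subst this
    exact h' hz
  by_cases hj : ∃ j, j ≠ i ∧ d ∈ Z i j
  · obtain ⟨j, hji, hdZ⟩ := hj
    obtain ⟨k, hki, hkj⟩ := third i j
    have half : ∀ i j, j ≠ i → ∀ a ∈ Z i j, ∀ c ∈ A, G.Adj a c →
        c ∈ Z i j ∪ Z j i ∨ c = w i ∨ c = w j := by
      rintro i j hji a ⟨C, hCf, hwC, hCc, haC, hadj⟩ c hcA hac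
      obtain ⟨k, hck⟩ := hcov c hcA
      by_cases hki : k = i
      · subst hki
        by_cases hcw : c = w k
        · exact Or.inr (Or.inl hcw)
        · refine Or.inl (Or.inl ⟨C ∪ {c}, Set.union_subset hCf (by simpa using hck), ?_,
            conn_union hCc (conn_singleton _ _) ⟨a, haC, c, rfl, hac⟩, Or.inr rfl, ?_⟩)
          · rintro (h | h)
            · exact hwC h
            · exact hcw h.symm
          · obtain ⟨u, hu, v, hv, huv⟩ := hadj
            exact ⟨u, Or.inl hu, v, hv, huv⟩
      · have hkj : k = j := hC i C hCf hwC hCc k j hki hji ⟨a, haC, c, hck, hac⟩ hadj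
        subst hkj
        by_cases hcw : c = w k
        · exact Or.inr (Or.inr hcw)
        · refine Or.inl (Or.inr ⟨{c}, by simpa using hck, fun h => hcw (Eq.symm h),
            conn_singleton _ _, rfl, c, rfl, a, hCf haC, hac.symm⟩)
    refine ⟨_, _, w i, w j, sep_of (Z := Z i j ∪ Z j i) (z := d) (b := w k)
      (Set.union_subset ((hZf i j).trans (f2 i)) ((hZf j i).trans (f2 j))) (f2 i (hw i))
      (f2 j (hw j)) ?_ ?_ (Or.inl hdZ) (f2 k (hw k)) ?_ (fun h => hki (hwne _ _ h))
      (fun h => hkj (hwne _ _ h)) ?_⟩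
    · rintro (h | h) <;> exact hwZ _ _ _ h
    · rintro (h | h) <;> exact hwZ _ _ _ h
    · rintro (h | h) <;> exact hwZ _ _ _ h
    · rintro a (ha | ha) c hcA hac
      · exact half i j hji a ha c hcA hac
      · rcases half j i hji.symm a ha c hcA hac with h | h | h
        · exact Or.inl h.symm
        · exact Or.inr (Or.inr h)
        · exact Or.inr (Or.inl h)
  · push Not at hj
    obtain ⟨k, hki, _⟩ := third i i
    have hdS : d ∈ f i \ {w i} := ⟨hi, fun h => hdw i h⟩
    have hsub := comp_sub G (f i \ {w i}) d
    have hwn : ∀ k, w k ∉ comp G (f i \ {w i}) d := by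
      intro k h
      have h' := hsub h
      have := f3 k i (w k) (hw k) h'.1
      subst this
      exact h'.2 rfl
    refine ⟨_, _, w i, w i, sep_of (Z := comp G (f i \ {w i}) d) (z := d) (b := w k)
      (fun z hz => f2 i (hsub hz).1) (f2 i (hw i)) (f2 i (hw i)) (hwn i) (hwn i)
      (comp_self hdS) (f2 k (hw k)) (hwn k) (fun h => hki (hwne _ _ h))
      (fun h => hki (hwne _ _ h)) ?_⟩
    intro a ha c hcA hac
    obtain ⟨l, hcl⟩ := hcov c hcA
    by_cases hli : l = i
    · subst hli
      by_cases hcw : c = w l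
      · exact Or.inr (Or.inl hcw)
      · exact Or.inl (comp_closed ha ⟨hcl, hcw⟩ hac)
    · exfalso
      refine hj l hli ⟨comp G (f i \ {w i}) d, fun z hz => (hsub hz).1, hwn i, comp_conn hdS,
        comp_self hdS, a, ha, c, hcl, hac⟩

def plus (G : SimpleGraph V) (x y : V) : SimpleGraph V where
  Adj a b := G.Adj a b ∨ (a ≠ b ∧ ((a = x ∧ b = y) ∨ (a = y ∧ b = x)))
  symm := ⟨by
    rintro a b (h | ⟨h, h' | h'⟩)
    · exact Or.inl h.symm
    · exact Or.inr ⟨h.symm, Or.inr ⟨h'.2, h'.1⟩⟩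
    · exact Or.inr ⟨h.symm, Or.inl ⟨h'.2, h'.1⟩⟩⟩
  loopless := ⟨by
    rintro a (h | h)
    · exact G.loopless.irrefl a h
    · exact h.1 rfl⟩

/-- Either `x` reaches `y` through `A₂ \ A₁`, or there is a separation of order at most one. -/
lemma linked {G : SimpleGraph V} {A A₁ A₂ : Set V} {x y : V} (h : Sep G A A₁ A₂ x y) (hxy : x ≠ y) :
    (∃ Q, Conn G Q ∧ x ∈ Q ∧ Q ⊆ (A₂ \ A₁) ∪ {x} ∧ AdjS G Q {y}) ∨
      ∃ B₁ B₂ z, Sep G A B₁ B₂ z z := by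
  set S : Set V := (A₂ \ A₁) ∪ {x} with hS
  have hxS : x ∈ S := Or.inr rfl
  have hyS : y ∉ S := by
    rintro (h' | h')
    · exact h'.2 h.y1
    · exact hxy h'.symm
  have hRS := comp_sub G S x
  have hA1 : A₁ ⊆ A := fun z hz => h.union ▸ Or.inl hz
  have hA2 : A₂ ⊆ A := fun z hz => h.union ▸ Or.inr hz
  by_cases hadj : AdjS G (comp G S x) {y}
  · exact Or.inl ⟨_, comp_conn hxS, comp_self hxS, hRS, hadj⟩
  right
  have hnb : ∀ a ∈ comp G S x, a ≠ x → ∀ c ∈ A, G.Adj a c → c ∈ comp G S x := by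
    intro a ha hax c hc hac
    have haA : a ∈ A₂ ∧ a ∉ A₁ := (hRS ha).resolve_right hax
    have hc2 : c ∈ A₂ := by
      by_contra hc2
      have hc1 : c ∈ A₁ := by
        rw [← h.union] at hc; exact hc.resolve_right hc2
      exact h.sep c hc1 hc2 a haA.1 haA.2 hac.symm
    by_cases hc1 : c ∈ A₁
    · rcases h.int c hc1 hc2 with rfl | rfl
      · exact comp_self hxS
      · exact absurd ⟨a, ha, c, rfl, hac⟩ hadj
    · exact comp_closed ha (Or.inl ⟨hc2, hc1⟩) hac
  by_cases hR : ∃ z ∈ comp G S x, z ≠ x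
  · obtain ⟨z, hz, hzx⟩ := hR
    refine ⟨_, _, x, sep_of (Z := comp G S x \ {x}) (z := z) (b := y) ?_ (hA1 h.x1) (hA1 h.x1)
      (fun h => h.2 rfl) (fun h => h.2 rfl) ⟨hz, hzx⟩ (hA1 h.y1) (fun h => hyS (hRS h.1))
      hxy.symm hxy.symm ?_⟩
    · rintro c ⟨hc, hcx⟩
      exact hA2 ((hRS hc).resolve_right hcx).1
    · rintro a ⟨ha, hax⟩ c hc hac
      by_cases hcx : c = x
      · exact Or.inr (Or.inl hcx)
      · exact Or.inl ⟨hnb a ha hax c hc hac, hcx⟩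
  · push Not at hR
    refine ⟨A₁, A₂ \ {x}, y, ?_, h.y1, ⟨h.y2, hxy.symm⟩, h.y1, ⟨h.y2, hxy.symm⟩, ?_, ?_, ?_, ?_⟩
    · rw [← h.union]
      ext c
      constructor
      · rintro (h' | h')
        exacts [Or.inl h', Or.inr h'.1]
      · rintro (h' | h')
        · exact Or.inl h'
        · by_cases hcx : c = x
          · exact Or.inl (hcx ▸ h.x1)
          · exact Or.inr ⟨h', hcx⟩
    · intro c h1 h2
      exact Or.inl ((h.int c h1 h2.1).resolve_left h2.2)
    · intro a ha ha' b hb hb' hab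
      by_cases hax : a = x
      · subst hax
        have := hR b (comp_closed (comp_self hxS) (Or.inl ⟨hb.1, hb'⟩) hab)
        exact hb.2 this
      · exact h.sep a ha (fun h => ha' ⟨h, hax⟩) b hb.1 hb' hab
    · obtain ⟨a, ha, ha'⟩ := h.ne1
      exact ⟨a, ha, fun h => ha' h.1⟩
    · obtain ⟨a, ha, ha'⟩ := h.ne2
      exact ⟨a, ⟨ha, fun h' => ha' ((show a = x from h') ▸ h.x1)⟩, ha'⟩

lemma minor_plus {H : SimpleGraph α} {G : SimpleGraph V} {A A₁ A₂ : Set V} {x y : V}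
    (h : Sep G A A₁ A₂ x y) (hxy : x ≠ y)
    (hQ : ∃ Q, Conn G Q ∧ x ∈ Q ∧ Q ⊆ (A₂ \ A₁) ∪ {x} ∧ AdjS G Q {y})
    (hM : MinorIn H (plus G x y) A₁) : MinorIn H G A := by
  classical
  obtain ⟨Q, hQc, hxQ, hQs, hQy⟩ := hQ
  have hA1 : A₁ ⊆ A := fun z hz => h.union ▸ Or.inl hz
  have hA2 : A₂ ⊆ A := fun z hz => h.union ▸ Or.inr hz
  have hself : ∀ a, a ∈ (if a = x then Q else {a}) := by
    intro a
    split_ifs with hax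
    · exact hax ▸ hxQ
    · rfl
  have hQA1 : ∀ v ∈ Q, v ∈ A₁ → v = x := by
    intro v hv hv1
    rcases hQs hv with h' | h'
    · exact absurd hv1 h'.2
    · exact h'
  refine minor_trans hM (fun a => if a = x then Q else {a}) ?_ ?_ ?_ ?_
  · intro a _
    split_ifs
    exacts [hQc, conn_singleton _ _]
  · intro a ha
    split_ifs
    · intro v hv
      rcases hQs hv with h' | h'
      · exact hA2 h'.1
      · exact (show v = x from h') ▸ hA1 h.x1
    · simpa using hA1 ha
  · intro a ha b hb v hva hvb
    split_ifs at hva hvb with h1 h2 h2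
    · rw [h1, h2]
    · rw [Set.mem_singleton_iff] at hvb
      subst hvb
      rw [h1, hQA1 v hva hb]
    · rw [Set.mem_singleton_iff] at hva
      subst hva
      rw [h2, hQA1 v hvb ha]
    · exact (Eq.symm hva).trans hvb
  · intro a ha b hb hab
    rcases hab with hab | ⟨_, ⟨rfl, rfl⟩ | ⟨rfl, rfl⟩⟩
    · exact ⟨a, hself a, b, hself b, hab⟩
    · simp only [if_true, hxy.symm, if_false]
      exact hQy
    · simp only [if_true, hxy.symm, if_false]
      obtain ⟨u, hu, v, hv, huv⟩ := hQy
      exact ⟨v, hv, u, hu, huv.symm⟩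

lemma good_sep {G : SimpleGraph V} {A : Set V} (hG : ¬ MinorIn K33 G A)
    (h : ∃ A₁ A₂ x y, Sep G A A₁ A₂ x y) :
    ∃ A₁ A₂ x y, Sep G A A₁ A₂ x y ∧ ¬ MinorIn K33 (plus G x y) A₁ ∧
      ¬ MinorIn K33 (plus G x y) A₂ := by
  by_cases h1 : ∃ B₁ B₂ z, Sep G A B₁ B₂ z z
  · obtain ⟨B₁, B₂, z, hs⟩ := h1
    have hpl : ∀ a b, (plus G z z).Adj a b → G.Adj a b := by
      rintro a b (h | ⟨h, h' | h'⟩)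
      · exact h
      · exact absurd (h'.1.trans h'.2.symm) h
      · exact absurd (h'.1.trans h'.2.symm) h
    refine ⟨B₁, B₂, z, z, hs, fun hM => hG ?_, fun hM => hG ?_⟩
    · exact minor_mono hM (fun z hz => hs.union ▸ Or.inl hz) fun a _ b _ => hpl a b
    · exact minor_mono hM (fun z hz => hs.union ▸ Or.inr hz) fun a _ b _ => hpl a b
  · obtain ⟨A₁, A₂, x, y, hs⟩ := h
    have hxy : x ≠ y := by
      rintro rfl
      exact h1 ⟨_, _, _, hs⟩
    exact ⟨A₁, A₂, x, y, hs,
      fun hM => hG (minor_plus hs hxy ((linked hs hxy).resolve_right h1) hM),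
      fun hM => hG (minor_plus hs.symm hxy ((linked hs.symm hxy).resolve_right h1) hM)⟩

/-- The quotient graph by the fibres of `r`, drawn on representatives. -/
def Qt (G : SimpleGraph V) (r : V → V) : SimpleGraph V where
  Adj a b := a ≠ b ∧ ∃ u v, r u = a ∧ r v = b ∧ G.Adj u v
  symm := ⟨by
    rintro a b ⟨h, u, v, h1, h2, h3⟩
    exact ⟨h.symm, v, u, h2, h1, h3.symm⟩⟩
  loopless := ⟨fun a h => h.1 rfl⟩

structure Good (G : SimpleGraph V) (A : Set V) (p q : V) (r : V → V) : Prop where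
  maps : ∀ v ∈ A, r v ∈ A
  out : ∀ v, v ∉ A → r v = v
  fib : ∀ u v, r u = r v → r u ≠ u → r v ≠ v → u = v
  hp : ∀ v, r v = p ↔ v = p
  hq : ∀ v, r v = q ↔ v = q
  cnt : 3 * {v | r v ≠ v}.ncard ≤ A.ncard - 2
  k5 : ¬ MinorIn K5 (Qt G r) A
  k33 : ¬ MinorIn K33 (Qt G r) A

lemma Good.anti {G G' : SimpleGraph V} {A : Set V} {p q : V} {r : V → V} (h : Good G' A p q r)
    (hG : ∀ a b, G.Adj a b → G'.Adj a b) : Good G A p q r := by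
  have hQ : ∀ a b, (Qt G r).Adj a b → (Qt G' r).Adj a b := by
    rintro a b ⟨h, u, v, h1, h2, h3⟩
    exact ⟨h, u, v, h1, h2, hG u v h3⟩
  exact { h with
    k5 := fun hM => h.k5 (minor_mono hM subset_rfl fun a _ b _ => hQ a b)
    k33 := fun hM => h.k33 (minor_mono hM subset_rfl fun a _ b _ => hQ a b) }

lemma step [Finite V] {G : SimpleGraph V} {A A₁ A₂ : Set V} {x y p q : V} {r₁ r₂ : V → V}
    (h : Sep G A A₁ A₂ x y) (hxy : x = y ∨ G.Adj x y) (hp : p ∈ A₁) (hq : q ∈ A₁)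
    (h₁ : Good G A₁ p q r₁) (h₂ : Good G A₂ x y r₂) : ∃ r, Good G A p q r := by
  classical
  have hA1 : A₁ ⊆ A := fun z hz => h.union ▸ Or.inl hz
  have hA2 : A₂ ⊆ A := fun z hz => h.union ▸ Or.inr hz
  have hA : ∀ z ∈ A, z ∉ A₁ → z ∈ A₂ := fun z hz hz1 => by
    rw [← h.union] at hz; exact hz.resolve_left hz1
  let r : V → V := fun v => if v ∈ A₁ then r₁ v else r₂ v
  have rin : ∀ v, v ∈ A₁ → r v = r₁ v := fun v hv => if_pos hv
  have rout : ∀ v, v ∉ A₁ → r v = r₂ v := fun v hv => if_neg hv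
  have r2n : ∀ v, v ∉ A₁ → r₂ v ∉ A₁ := by
    intro v hv hv'
    by_cases hv2 : v ∈ A₂
    · rcases h.int _ hv' (h₂.maps v hv2) with h' | h'
      · rw [h₂.hp] at h'; exact hv (h' ▸ h.x1)
      · rw [h₂.hq] at h'; exact hv (h' ▸ h.y1)
    · rw [h₂.out v hv2] at hv'; exact hv hv'
  have rmem : ∀ v, r v ∈ A₁ ↔ v ∈ A₁ := by
    intro v
    by_cases hv : v ∈ A₁
    · rw [rin v hv]; exact ⟨fun _ => hv, fun _ => h₁.maps v hv⟩
    · rw [rout v hv]; exact ⟨fun h => absurd h (r2n v hv), fun h => absurd h hv⟩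
  have hne : ∀ v, r v ≠ v → r₁ v ≠ v ∨ r₂ v ≠ v := by
    intro v hv
    by_cases hv1 : v ∈ A₁
    · rw [rin v hv1] at hv; exact Or.inl hv
    · rw [rout v hv1] at hv; exact Or.inr hv
  -- minors of the quotient
  have hminor : ∀ {α : Type} (H : SimpleGraph α), Nice H → MinorIn H (Qt G r) A →
      MinorIn H (Qt G r₁) A₁ ∨ MinorIn H (Qt G r₂) A₂ := by
    intro α H hH hM
    set A' : Set V := (A₂ \ A₁) ∪ {r₁ x, r₁ y} with hA'
    have hx' := h₁.maps x h.x1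
    have hy' := h₁.maps y h.y1
    have hA'1 : ∀ z, z ∈ A₁ → z ∈ A' → z = r₁ x ∨ z = r₁ y := by
      rintro z h1 (h2 | h2)
      · exact absurd h1 h2.2
      · exact h2
    have hadjxy : r₁ x = r₁ y ∨ (Qt G r).Adj (r₁ x) (r₁ y) := by
      by_cases he : r₁ x = r₁ y
      · exact Or.inl he
      · right
        have : G.Adj x y := hxy.resolve_left fun h => he (by rw [h])
        exact ⟨he, x, y, rin x h.x1, rin y h.y1, this⟩
    -- edges leaving A₁ start in x or y
    have hcross : ∀ u v, u ∈ A₁ → v ∉ A₁ → r v ∈ A' → G.Adj u v → v ∈ A₂ ∧ (u = x ∨ u = y) := by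
      intro u v hu hv hv' huv
      have hrv : r v ∉ A₁ := fun h => hv ((rmem v).1 h)
      have hrv2 : r v ∈ A₂ := by
        rcases hv' with h' | h' | h'
        · exact h'.1
        · exact absurd (h' ▸ hx') hrv
        · exact absurd ((show r v = r₁ y from h') ▸ hy') hrv
      have hv2 : v ∈ A₂ := by
        by_contra hv2
        rw [rout v hv, h₂.out v hv2] at hrv2
        exact hv2 hrv2
      have hu2 : u ∈ A₂ := by
        by_contra hu2
        exact h.sep u hu hu2 v hv2 hv huv
      exact ⟨hv2, h.int u hu hu2⟩
    have hS1 : A ⊆ A₁ ∪ A' := by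
      intro z hz
      by_cases hz1 : z ∈ A₁
      · exact Or.inl hz1
      · exact Or.inr (Or.inl ⟨hA z hz hz1, hz1⟩)
    have hS2 : ∀ a ∈ A₁, a ∉ A' → ∀ b ∈ A', b ∉ A₁ → ¬ (Qt G r).Adj a b := by
      rintro a ha ha' b hb hb' ⟨hab, u, v, rfl, rfl, huv⟩
      have hu := (rmem u).1 ha
      have hv : v ∉ A₁ := fun h => hb' ((rmem v).2 h)
      obtain ⟨_, h' | h'⟩ := hcross u v hu hv hb huv
      · apply ha'; rw [rin u hu, h']; exact Or.inr (Or.inl rfl)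
      · apply ha'; rw [rin u hu, h']; exact Or.inr (Or.inr rfl)
    rcases clique_sum (A₁ := A₁) (A₂ := A') (x := r₁ x) (y := r₁ y) hH hS1 hx' hy'
      (Or.inr (Or.inl rfl)) (Or.inr (Or.inr rfl)) hA'1 hS2 hadjxy hM with hM1 | hM2
    · left
      refine minor_mono hM1 subset_rfl ?_
      rintro a ha b hb ⟨hab, u, v, rfl, rfl, huv⟩
      have hu := (rmem u).1 ha
      have hv := (rmem v).1 hb
      exact ⟨hab, u, v, (rin u hu).symm, (rin v hv).symm, huv⟩
    · right
      have hxyQ : x = y ∨ (Qt G r₂).Adj x y := by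
        by_cases he : x = y
        · exact Or.inl he
        · exact Or.inr ⟨he, x, y, (h₂.hp x).2 rfl, (h₂.hq y).2 rfl, hxy.resolve_left he⟩
      refine minor_trans hM2 (fun a => {z | z ∈ A₂ ∧ r₁ z = a}) ?_ ?_ ?_ ?_
      · intro a ha
        by_cases ha1 : a ∈ A₁
        · have hsub : ∀ z, z ∈ A₂ → r₁ z = a → z = x ∨ z = y := by
            intro z hz hza
            refine h.int z ?_ hz
            by_contra hz1
            rw [h₁.out z hz1] at hza
            exact hz1 (hza ▸ ha1)
          have hor := hA'1 a ha1 ha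
          by_cases hboth : r₁ x = a ∧ r₁ y = a
          · have : {z | z ∈ A₂ ∧ r₁ z = a} = {x} ∪ {y} := by
              ext z
              constructor
              · rintro ⟨h1, h2⟩; exact hsub z h1 h2
              · rintro (h' | h')
                · rw [show z = x from h']; exact ⟨h.x2, hboth.1⟩
                · rw [show z = y from h']; exact ⟨h.y2, hboth.2⟩
            rw [this]
            rcases hxyQ with he | he
            · subst he
              rw [Set.union_self]; exact conn_singleton _ _
            · exact conn_union (conn_singleton _ _) (conn_singleton _ _) ⟨x, rfl, y, rfl, he⟩
          · have : ∃ z, {z | z ∈ A₂ ∧ r₁ z = a} = {z} := by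
              rcases hor with h' | h'
              · refine ⟨x, ?_⟩
                ext z
                constructor
                · rintro ⟨h1, h2⟩
                  rcases hsub z h1 h2 with h3 | h3
                  · exact h3
                  · subst h3; exact absurd ⟨h'.symm, h2⟩ hboth
                · intro h3; rw [show z = x from h3]; exact ⟨h.x2, h'.symm⟩
              · refine ⟨y, ?_⟩
                ext z
                constructor
                · rintro ⟨h1, h2⟩
                  rcases hsub z h1 h2 with h3 | h3
                  · subst h3; exact absurd ⟨h2, h'.symm⟩ hboth
                  · exact h3
                · intro h3; rw [show z = y from h3]; exact ⟨h.y2, h'.symm⟩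
            obtain ⟨z, hz⟩ := this
            rw [hz]; exact conn_singleton _ _
        · have : {z | z ∈ A₂ ∧ r₁ z = a} = {a} := by
            ext z
            constructor
            · rintro ⟨_, h2⟩
              by_cases hz1 : z ∈ A₁
              · exact absurd (h2 ▸ h₁.maps z hz1) ha1
              · rw [h₁.out z hz1] at h2; exact h2
            · intro hz
              rw [show z = a from hz]
              refine ⟨?_, h₁.out a ha1⟩
              rcases ha with h' | h' | h'
              · exact h'.1
              · exact absurd (h' ▸ hx') ha1
              · exact absurd ((show a = r₁ y from h') ▸ hy') ha1
          rw [this]; exact conn_singleton _ _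
      · intro a _ z hz; exact hz.1
      · intro a _ b _ v hva hvb
        exact hva.2.symm.trans hvb.2
      · -- one endpoint outside A₁, the other inside
        have mixed : ∀ u v, u ∈ A₁ → v ∉ A₁ → r v ∈ A' → G.Adj u v →
            AdjS (Qt G r₂) {z | z ∈ A₂ ∧ r₁ z = r u} {z | z ∈ A₂ ∧ r₁ z = r v} := by
          intro u v hu hv hv' huv
          obtain ⟨hv2, huxy⟩ := hcross u v hu hv hv' huv
          have hu2 : u ∈ A₂ := by rcases huxy with rfl | rfl; exacts [h.x2, h.y2]
          have hru : r₂ u = u := by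
            rcases huxy with rfl | rfl
            exacts [(h₂.hp u).2 rfl, (h₂.hq u).2 rfl]
          refine ⟨u, ⟨hu2, (rin u hu).symm⟩, r₂ v, ⟨h₂.maps v hv2, ?_⟩, ?_, u, v, hru, rfl, huv⟩
          · rw [h₁.out _ (r2n v hv), rout v hv]
          · intro he; exact r2n v hv (he ▸ hu)
        rintro a ha b hb ⟨hab, u, v, rfl, rfl, huv⟩
        by_cases hu : u ∈ A₁ <;> by_cases hv : v ∈ A₁
        · have e1 := hA'1 _ ((rmem u).2 hu) ha
          have e2 := hA'1 _ ((rmem v).2 hv) hb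
          rcases e1 with e1 | e1 <;> rcases e2 with e2 | e2
          · exact absurd (e1.trans e2.symm) hab
          · refine ⟨x, ⟨h.x2, e1.symm⟩, y, ⟨h.y2, e2.symm⟩, hxyQ.resolve_left ?_⟩
            rintro rfl; exact hab (e1.trans e2.symm)
          · refine ⟨y, ⟨h.y2, e1.symm⟩, x, ⟨h.x2, e2.symm⟩, (hxyQ.resolve_left ?_).symm⟩
            rintro rfl; exact hab (e1.trans e2.symm)
          · exact absurd (e1.trans e2.symm) hab
        · exact mixed u v hu hv hb huv
        · obtain ⟨s, hs, t, ht, hst⟩ := mixed v u hv hu ha huv.symm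
          exact ⟨t, ht, s, hs, hst.symm⟩
        · have mem2 : ∀ u, u ∉ A₁ → r u ∈ A' → r₂ u ∈ A₂ ∧ r₁ (r₂ u) = r u := by
            intro u hu ha
            refine ⟨?_, by rw [h₁.out _ (r2n u hu), rout u hu]⟩
            have hru : r u ∉ A₁ := fun h => hu ((rmem u).1 h)
            rw [← rout u hu]
            rcases ha with h' | h' | h'
            · exact h'.1
            · exact absurd (h' ▸ hx') hru
            · exact absurd ((show r u = r₁ y from h') ▸ hy') hru
          refine ⟨r₂ u, mem2 u hu ha, r₂ v, mem2 v hv hb, ?_, u, v, rfl, rfl, huv⟩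
          rw [← rout u hu, ← rout v hv]; exact hab
  refine ⟨r, ?_, ?_, ?_, ?_, ?_, ?_, ?_, ?_⟩
  · intro v hv
    by_cases hv1 : v ∈ A₁
    · rw [rin v hv1]; exact hA1 (h₁.maps v hv1)
    · rw [rout v hv1]; exact hA2 (h₂.maps v (hA v hv hv1))
  · intro v hv
    rw [rout v fun h => hv (hA1 h)]
    exact h₂.out v fun h => hv (hA2 h)
  · intro u v huv hu hv
    by_cases hu1 : u ∈ A₁
    · have hv1 : v ∈ A₁ := by rw [← rmem, ← huv, rmem]; exact hu1
      rw [rin u hu1] at hu huv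
      rw [rin v hv1] at hv huv
      exact h₁.fib u v huv hu hv
    · have hv1 : v ∉ A₁ := by rw [← rmem, ← huv, rmem]; exact hu1
      rw [rout u hu1] at hu huv
      rw [rout v hv1] at hv huv
      exact h₂.fib u v huv hu hv
  · intro v
    by_cases hv1 : v ∈ A₁
    · rw [rin v hv1]; exact h₁.hp v
    · constructor
      · intro h'; exact absurd ((rmem v).1 (h' ▸ hp)) hv1
      · intro h'; exact absurd (h' ▸ hp) hv1
  · intro v
    by_cases hv1 : v ∈ A₁
    · rw [rin v hv1]; exact h₁.hq v
    · constructor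
      · intro h'; exact absurd ((rmem v).1 (h' ▸ hq)) hv1
      · intro h'; exact absurd (h' ▸ hq) hv1
  · have c1 : {v | r v ≠ v}.ncard ≤ {v | r₁ v ≠ v}.ncard + {v | r₂ v ≠ v}.ncard :=
      (Set.ncard_le_ncard (t := {v | r₁ v ≠ v} ∪ {v | r₂ v ≠ v}) (fun v hv => hne v hv)
        (Set.toFinite _)).trans (Set.ncard_union_le _ _)
    have c2 : A₁.ncard + A₂.ncard ≤ A.ncard + 2 := by
      have e := Set.ncard_union_add_ncard_inter A₁ A₂ (Set.toFinite _) (Set.toFinite _)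
      have e2 : (A₁ ∩ A₂).ncard ≤ 2 :=
        (Set.ncard_le_ncard (t := {x, y}) (fun z hz => h.int z hz.1 hz.2)
          (Set.toFinite _)).trans (ncard_pair_le2 x y)
      rw [h.union] at e
      omega
    have two : ∀ S : Set V, ∀ a b, a ∈ S → b ∈ S → a ≠ b → 2 ≤ S.ncard := by
      intro S a b ha hb hab
      exact (Set.one_lt_ncard_iff (Set.toFinite _)).2 ⟨a, b, ha, hb, hab⟩
    have c3 : 2 ≤ A₁.ncard := by
      obtain ⟨a, ha, ha'⟩ := h.ne1
      exact two _ a x ha h.x1 fun he => ha' (he ▸ h.x2)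
    have c4 : 2 ≤ A₂.ncard := by
      obtain ⟨a, ha, ha'⟩ := h.ne2
      exact two _ a x ha h.x2 fun he => ha' (he ▸ h.x1)
    have := h₁.cnt
    have := h₂.cnt
    omega
  · intro hM
    rcases hminor _ nice_K5 hM with h' | h'
    exacts [h₁.k5 h', h₂.k5 h']
  · intro hM
    rcases hminor _ nice_K33 hM with h' | h'
    exacts [h₁.k33 h', h₂.k33 h']

/-- A set with at most five vertices with an isolated one has no nice minor. -/
lemma no_minor_small [Finite V] {H : SimpleGraph α} (hH : Nice H) {G : SimpleGraph V} {A : Set V}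
    (hA : A.ncard = 5) {d : V} (hd : d ∈ A) (hiso : ∀ a, ¬ G.Adj d a) : ¬ MinorIn H G A := by
  rintro ⟨f, f1, f2, f3, f4⟩
  have hdf : ∀ i, d ∉ f i := by
    intro i hdi
    have hsub := (f1 i).2 {d} (by simpa using hdi) ⟨d, rfl⟩ (by
      intro a ha b _ hab
      rw [Set.mem_singleton_iff] at ha
      subst ha
      exact absurd hab (hiso b))
    obtain ⟨j, hj⟩ := hH.deg i
    obtain ⟨u, hu, v, _, huv⟩ := f4 i j hj
    have : u = d := hsub hu
    subst this
    exact hiso v huv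
  obtain ⟨e, he⟩ := hH.five
  choose g hg using fun i => (f1 i).1
  have hinj : Function.Injective (fun i => g (e i)) := by
    intro i j hij
    dsimp only at hij
    exact he (f3 _ _ (g (e i)) (hg _) (hij ▸ hg _))
  have h1 : (Set.range fun i => g (e i)) ⊆ A \ {d} := by
    rintro _ ⟨i, rfl⟩
    exact ⟨f2 _ (hg _), fun h => hdf (e i) ((show g (e i) = d from h) ▸ hg (e i))⟩
  have h2 := Set.ncard_le_ncard h1 (Set.toFinite _)
  rw [Set.ncard_sdiff_singleton_of_mem hd, hA, ← Nat.card_coe_set_eq,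
    Nat.card_range_of_injective hinj] at h2
  simp at h2

theorem main_aux [Finite V] : ∀ n : ℕ, ∀ (G : SimpleGraph V) (A : Set V), A.ncard = n →
    ¬ MinorIn K33 G A → ∀ p ∈ A, ∀ q ∈ A, (p = q ∨ G.Adj p q) → ∃ r, Good G A p q r := by
  classical
  intro n
  induction n using Nat.strong_induction_on with
  | _ n ih =>
  intro G A hn hG p hp q hq hpq
  by_cases h5 : MinorIn K5 G A
  swap
  · have hQ : ∀ a b, (Qt G id).Adj a b → G.Adj a b := by
      rintro a b ⟨_, u, v, rfl, rfl, h⟩; exact h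
    refine ⟨id, fun v hv => hv, fun v _ => rfl, fun u v h _ _ => h, fun v => Iff.rfl,
      fun v => Iff.rfl, by simp, ?_, ?_⟩
    · exact fun hM => h5 (minor_mono hM subset_rfl fun a _ b _ => hQ a b)
    · exact fun hM => hG (minor_mono hM subset_rfl fun a _ b _ => hQ a b)
  rcases exists_sep hG h5 with hc | hs
  · -- five vertices
    have h3 : 1 < (A \ {p, q}).ncard := by
      have := Set.le_ncard_sdiff {p, q} A (Set.toFinite _)
      have := ncard_pair_le2 p q
      omega
    obtain ⟨c, d, hcA, hdA, hcd⟩ := (Set.one_lt_ncard_iff (Set.toFinite _)).1 h3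
    have hdp : d ≠ p := fun h => hdA.2 (Or.inl h)
    have hdq : d ≠ q := fun h => hdA.2 (Or.inr h)
    have hcp : c ≠ p := fun h => hcA.2 (Or.inl h)
    have hcq : c ≠ q := fun h => hcA.2 (Or.inr h)
    have hiso : ∀ a, ¬ (Qt G (fun v => if v = d then c else v)).Adj d a := by
      rintro a ⟨_, u, v, hu, _⟩
      change (if u = d then c else u) = d at hu
      split_ifs at hu with h
      · exact hcd hu
      · exact h hu
    refine ⟨fun v => if v = d then c else v, ?_, ?_, ?_, ?_, ?_, ?_, ?_, ?_⟩
    · intro v hv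
      split_ifs
      exacts [hcA.1, hv]
    · intro v hv
      rw [if_neg]
      rintro rfl
      exact hv hdA.1
    · intro u v; grind
    · intro v; grind
    · intro v; grind
    · have : {v | (if v = d then c else v) ≠ v} = {d} := by
        ext v; simp only [Set.mem_ofPred_eq, Set.mem_singleton_iff]; grind
      rw [this, Set.ncard_singleton, hc]
    · exact no_minor_small nice_K5 hc hdA.1 hiso
    · exact no_minor_small nice_K33 hc hdA.1 hiso
  · obtain ⟨A₁, A₂, x, y, hs, hG1, hG2⟩ := good_sep hG hs
    have hlt : ∀ {A₁ A₂ x y}, Sep G A A₁ A₂ x y → A₁.ncard < n := by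
      intro A₁ A₂ x y hs
      rw [← hn]
      refine Set.ncard_lt_ncard ⟨fun z hz => hs.union ▸ Or.inl hz, ?_⟩ (Set.toFinite _)
      intro hsub
      obtain ⟨a, ha, ha'⟩ := hs.ne2
      exact ha' (hsub (hs.union ▸ Or.inr ha))
    have main : ∀ {A₁ A₂}, Sep G A A₁ A₂ x y → ¬ MinorIn K33 (plus G x y) A₁ →
        ¬ MinorIn K33 (plus G x y) A₂ → p ∈ A₁ → q ∈ A₁ → ∃ r, Good G A p q r := by
      intro A₁ A₂ hs hG1 hG2 hp1 hq1
      have hadj : x = y ∨ (plus G x y).Adj x y := by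
        by_cases he : x = y
        · exact Or.inl he
        · exact Or.inr (Or.inr ⟨he, Or.inl ⟨rfl, rfl⟩⟩)
      obtain ⟨r₁, h₁⟩ := ih _ (hlt hs) (plus G x y) A₁ rfl hG1 p hp1 q hq1
        (hpq.imp id Or.inl)
      obtain ⟨r₂, h₂⟩ := ih _ (hlt hs.symm) (plus G x y) A₂ rfl hG2 x hs.x2 y hs.y2 hadj
      have hs' : Sep (plus G x y) A A₁ A₂ x y := { hs with
        sep := by
          rintro a ha ha' b hb hb' (hab | ⟨_, ⟨rfl, rfl⟩ | ⟨rfl, rfl⟩⟩)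
          · exact hs.sep a ha ha' b hb hb' hab
          · exact ha' hs.x2
          · exact ha' hs.y2 }
      obtain ⟨r, hr⟩ := step hs' hadj hp1 hq1 h₁ h₂
      exact ⟨r, hr.anti fun a b => Or.inl⟩
    by_cases h1 : p ∈ A₁ ∧ q ∈ A₁
    · exact main hs hG1 hG2 h1.1 h1.2
    · have hmem : ∀ z ∈ A, z ∈ A₁ ∨ z ∈ A₂ := fun z hz => by rw [← hs.union] at hz; exact hz
      have h2 : p ∈ A₂ ∧ q ∈ A₂ := by
        rcases hpq with rfl | hpq
        · have : p ∈ A₂ := (hmem p hp).resolve_left fun h => h1 ⟨h, h⟩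
          exact ⟨this, this⟩
        · by_cases hp1 : p ∈ A₁
          · have hq1 : q ∉ A₁ := fun h => h1 ⟨hp1, h⟩
            have hq2 := (hmem q hq).resolve_left hq1
            refine ⟨?_, hq2⟩
            by_contra hp2
            exact hs.sep p hp1 hp2 q hq2 hq1 hpq
          · have hp2 := (hmem p hp).resolve_left hp1
            refine ⟨hp2, ?_⟩
            by_contra hq2
            exact hs.sep q ((hmem q hq).resolve_right hq2) hq2 p hp2 hp1 hpq.symm
      exact main hs.symm hG2 hG1 h2.1 h2.2

end Aux

/-- Every `K₃,₃`-minor-free graph `G` has a planar partition of width 2 with at most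
`(|V(G)| − 2)/3` bags of cardinality 2 (all other bags singletons): a partition of
`V(G)` into parts of size at most 2 whose quotient graph is planar, with at most
`(|V(G)| − 2)/3` parts of size 2. -/
theorem stmt18 {V : Type*} [Fintype V] [DecidableEq V] (G : SimpleGraph V)
    (hK33 : ¬ IsMinor (completeBipartiteGraph (Fin 3) (Fin 3)) G) :
    ∃ P : Finset (Finset V),
      (∀ p ∈ P, p.Nonempty) ∧
      (∀ v : V, ∃! p, p ∈ P ∧ v ∈ p) ∧
      (∀ p ∈ P, p.card ≤ 2) ∧
      3 * (P.filter fun p => p.card = 2).card ≤ Fintype.card V - 2 ∧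
      Planar (SimpleGraph.fromRel fun p q : {p : Finset V // p ∈ P} =>
        ∃ u ∈ p.1, ∃ v ∈ q.1, G.Adj u v) := by
  classical
  rw [Aux.minor_univ] at hK33
  -- a suitable map `r`
  obtain ⟨r, hfib, hcnt, h5, h33⟩ : ∃ r : V → V,
      (∀ u v, r u = r v → r u ≠ u → r v ≠ v → u = v) ∧
      3 * {v | r v ≠ v}.ncard ≤ Fintype.card V - 2 ∧
      ¬ Aux.MinorIn Aux.K5 (Aux.Qt G r) Set.univ ∧
      ¬ Aux.MinorIn Aux.K33 (Aux.Qt G r) Set.univ := by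
    by_cases hV : Nonempty V
    · obtain ⟨p⟩ := hV
      obtain ⟨r, hr⟩ := Aux.main_aux _ G Set.univ rfl hK33 p trivial p trivial (Or.inl rfl)
      refine ⟨r, hr.fib, ?_, hr.k5, hr.k33⟩
      have := hr.cnt
      rwa [Set.ncard_univ, Nat.card_eq_fintype_card] at this
    · rw [not_nonempty_iff] at hV
      refine ⟨id, fun u => isEmptyElim u, by simp, ?_, ?_⟩
      · rintro ⟨f, f1, _⟩
        exact isEmptyElim (f1 0).1.some
      · rintro ⟨f, f1, _⟩
        exact isEmptyElim (f1 (Sum.inl 0)).1.some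
  let bag : V → Finset V := fun v => Finset.univ.filter fun u => r u = r v
  have mem_bag : ∀ u v, u ∈ bag v ↔ r u = r v := by intro u v; simp [bag]
  have bag_eq : ∀ u v, r u = r v → bag u = bag v := by
    intro u v h; ext w; rw [mem_bag, mem_bag, h]
  refine ⟨Finset.univ.image bag, ?_, ?_, ?_, ?_, ?_⟩
  · intro p hp
    obtain ⟨v, _, rfl⟩ := Finset.mem_image.1 hp
    exact ⟨v, (mem_bag v v).2 rfl⟩
  · intro v
    refine ⟨bag v, ⟨Finset.mem_image_of_mem _ (Finset.mem_univ _), (mem_bag v v).2 rfl⟩, ?_⟩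
    rintro p ⟨hp, hv⟩
    obtain ⟨w, _, rfl⟩ := Finset.mem_image.1 hp
    exact (bag_eq v w ((mem_bag v w).1 hv)).symm
  · intro p hp
    obtain ⟨v, _, rfl⟩ := Finset.mem_image.1 hp
    by_contra hcon
    push Not at hcon
    obtain ⟨a, b, c, ha, hb, hc, hab, hac, hbc⟩ := Finset.two_lt_card_iff.1 hcon
    rw [mem_bag] at ha hb hc
    have h1 := hfib a b (ha.trans hb.symm)
    have h2 := hfib a c (ha.trans hc.symm)
    have h3 := hfib b c (hb.trans hc.symm)
    by_cases fa : r a = a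
    · have nb : r b ≠ b := fun fb => hab (fa.symm.trans (ha.trans (hb.symm.trans fb)))
      have nc : r c ≠ c := fun fc => hac (fa.symm.trans (ha.trans (hc.symm.trans fc)))
      exact hbc (h3 nb nc)
    · by_cases fb : r b = b
      · have nc : r c ≠ c := fun fc => hbc (fb.symm.trans (hb.trans (hc.symm.trans fc)))
        exact hac (h2 fa nc)
      · exact hab (h1 fa fb)
  · refine le_trans (Nat.mul_le_mul_left 3 ?_) hcnt
    rw [Set.ncard_eq_toFinset_card']
    refine le_trans (Finset.card_le_card (t := ({v | r v ≠ v} : Set V).toFinset.image bag) ?_)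
      Finset.card_image_le
    intro p hp
    obtain ⟨hp, hp2⟩ := Finset.mem_filter.1 hp
    obtain ⟨v, _, rfl⟩ := Finset.mem_image.1 hp
    obtain ⟨a, b, hab, heq⟩ := Finset.card_eq_two.1 hp2
    have ha : r a = r v := (mem_bag a v).1 (by rw [heq]; simp)
    have hb : r b = r v := (mem_bag b v).1 (by rw [heq]; simp)
    rw [Finset.mem_image]
    by_cases hra : r a = a
    · refine ⟨b, ?_, bag_eq b v hb⟩
      simp only [Set.mem_toFinset, Set.mem_ofPred_eq]
      intro hrb
      exact hab (hra.symm.trans (ha.trans (hb.symm.trans hrb)))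
    · exact ⟨a, by simpa using hra, bag_eq a v ha⟩
  · have hrep : ∀ p : {p : Finset V // p ∈ Finset.univ.image bag}, ∃ v, bag v = p.1 := by
      intro p
      obtain ⟨v, _, h⟩ := Finset.mem_image.1 p.2
      exact ⟨v, h⟩
    choose g hg using hrep
    have hgr : ∀ p, ∀ u ∈ p.1, r u = r (g p) := by
      intro p u hu
      rw [← mem_bag, hg]; exact hu
    have tr : ∀ {α : Type} (H : SimpleGraph α), IsMinor H (SimpleGraph.fromRel fun p q :
        {p : Finset V // p ∈ Finset.univ.image bag} => ∃ u ∈ p.1, ∃ v ∈ q.1, G.Adj u v) →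
        Aux.MinorIn H (Aux.Qt G r) Set.univ := by
      intro α H hM
      rw [Aux.minor_univ] at hM
      have hinj : ∀ p q, r (g p) = r (g q) → p = q := by
        intro p q h
        apply Subtype.ext
        rw [← hg p, ← hg q]
        exact bag_eq _ _ h
      refine Aux.minor_trans hM (fun p => {r (g p)}) (fun _ _ => Aux.conn_singleton _ _)
        (fun _ _ => Set.subset_univ _) ?_ ?_
      · intro p _ q _ v hp hq
        exact hinj p q ((Eq.symm hp).trans hq)
      · intro p _ q _ hpq
        rw [SimpleGraph.fromRel_adj] at hpq
        obtain ⟨hne, h⟩ := hpq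
        refine ⟨_, rfl, _, rfl, fun h => hne (hinj p q h), ?_⟩
        rcases h with ⟨u, hu, v, hv, huv⟩ | ⟨u, hu, v, hv, huv⟩
        · exact ⟨u, v, hgr p u hu, hgr q v hv, huv⟩
        · exact ⟨v, u, hgr p v hv, hgr q u hu, huv.symm⟩
    exact ⟨fun hM => h5 (tr _ hM), fun hM => h33 (tr _ hM)⟩
end
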